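/- With θ = 0.8234, for every n ≥ 1, every w ∈ W, and every y ∈ W one has |Q^n(w,[0,y)) − Q∞([0,y))| ≤ θ^n, where Q^n is the n-step transition probability function. -/

import Mathlib

open Real MeasureTheory Filter Set
open scoped ENNReal NNReal Classical

namespace OCF

/-- The golden ratio `G = (1+√5)/2`. -/
noncomputable def G : ℝ := (1 + Real.sqrt 5) / 2

/-- `g = (√5-1)/2`. -/
noncomputable def gg : ℝ := (Real.sqrt 5 - 1) / 2

/-- The map `u : W × X → W` of the RSCC; `uF w e i = u(w,(e,i))`. -/
noncomputable def uF (w : ℝ) (e i : ℤ) : ℝ :=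
  if e = 1 then 1 / (i + w)
  else if w < gg ^ 2 then 1 / (i - w) else 1 / (i - gg ^ 2)

/-- The probabilities `P : W × X → [0,∞)` of the RSCC; `PF w e i = P(w,(e,i))`. -/
noncomputable def PF (w : ℝ) (e i : ℤ) : ℝ :=
  if w < gg ^ 2 then
    (1 - w ^ 2) * (2 - (if i = 1 then 1 else 0)) /
      (2 * ((i : ℝ) - 1 + (if i = 1 then 1 else 0) + (e : ℝ) * w) * ((i : ℝ) + 1 + (e : ℝ) * w))
  else
    (1 + w) * (2 - (if i = 1 then 1 else 0)) * (if e = 1 then 1 else 0) /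
      (((i : ℝ) - 1 + (if i = 1 then 1 else 0) + w) * ((i : ℝ) + 1 + w))

/-- The transition probability function
`Q(w,B) = Σ_{(e,i) ∈ X : u(w,(e,i)) ∈ B} P(w,(e,i))`, where odd `i` is written as `2m+1`. -/
noncomputable def Qf (w : ℝ) (B : Set ℝ) : ℝ :=
  ∑' m : ℕ, ((if uF w 1 (2 * (m : ℤ) + 1) ∈ B then PF w 1 (2 * (m : ℤ) + 1) else 0)
           + (if uF w (-1) (2 * (m : ℤ) + 1) ∈ B then PF w (-1) (2 * (m : ℤ) + 1) else 0))

/-- The stationary probability measure `Q∞` on `W = [0,G]`. -/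
noncomputable def Qinf : Measure ℝ :=
  (volume.restrict (Set.Icc (0 : ℝ) G)).withDensity
    (fun w => ENNReal.ofReal ((3 * Real.log G)⁻¹ *
      (if w < gg ^ 2 then 1 / (1 + w) + 1 / (1 - w) else 1 / (1 + w))))

/-- The transition operator `U` of the Markov chain: `Uf(w) = Σ_{(e,i)} P(w,(e,i)) f(u(w,(e,i)))`. -/
noncomputable def U (f : ℝ → ℂ) : ℝ → ℂ := fun w =>
  ∑' m : ℕ, ((PF w 1 (2 * (m : ℤ) + 1) : ℂ) * f (uF w 1 (2 * (m : ℤ) + 1))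
           + (PF w (-1) (2 * (m : ℤ) + 1) : ℂ) * f (uF w (-1) (2 * (m : ℤ) + 1)))

/-- The `n`-step transition probability, as a measure-valued kernel: `Qiter 1 w = Q(w,·)` and
`Qiter (n+1) w B = ∫_W Qiter n w' B Q(w,dw')` (the transition measure `Q(w,·)` being purely
atomic with atom `u(w,(e,i))` of mass `P(w,(e,i))`). -/
noncomputable def Qiter : ℕ → ℝ → Measure ℝ
  | 0 => fun w => Measure.dirac w
  | n + 1 => fun w => Measure.sum (fun m : ℕ =>
      ENNReal.ofReal (PF w 1 (2 * (m : ℤ) + 1)) • Qiter n (uF w 1 (2 * (m : ℤ) + 1)) +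
      ENNReal.ofReal (PF w (-1) (2 * (m : ℤ) + 1)) • Qiter n (uF w (-1) (2 * (m : ℤ) + 1)))

end OCF

open OCF

namespace OCF

noncomputable def q : ℝ := gg ^ 2

lemma q_sq : q ^ 2 = 3 * q - 1 := by
  have h5 : Real.sqrt 5 ^ 2 = 5 := Real.sq_sqrt (by norm_num)
  unfold q gg
  nlinarith [h5]

lemma G_eq : G = 2 - q := by
  have h5 : Real.sqrt 5 ^ 2 = 5 := Real.sq_sqrt (by norm_num)
  unfold q gg G
  nlinarith [h5]

lemma q_lt : q < 0.382 := by
  have h5 : Real.sqrt 5 ^ 2 = 5 := Real.sq_sqrt (by norm_num)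
  have h0 : 2.236 < Real.sqrt 5 := Real.lt_sqrt_of_sq_lt (by norm_num)
  unfold q gg
  nlinarith [h5]

lemma lt_q : 0.3819 < q := by
  have h5 : Real.sqrt 5 ^ 2 = 5 := Real.sq_sqrt (by norm_num)
  have h0 : Real.sqrt 5 < 2.2361 := (Real.sqrt_lt' (by norm_num)).2 (by norm_num)
  unfold q gg
  nlinarith [h5]

noncomputable def c (m : ℕ) : ℝ := if m = 0 then 1 else 2 * m

lemma c_zero : c 0 = 1 := by simp [c]
lemma c_succ (m : ℕ) : c (m + 1) = 2 * m + 2 := by simp [c]; ring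
lemma c_pos (m : ℕ) : 1 ≤ c m := by
  cases m with
  | zero => simp [c]
  | succ k => rw [c_succ]; have : (0:ℝ) ≤ k := k.cast_nonneg; linarith
lemma c_le (m : ℕ) : c m ≤ c (m + 1) := by
  cases m with
  | zero => simp [c]
  | succ k => rw [c_succ, c_succ]; push_cast; linarith

noncomputable def av (x : ℝ) (m : ℕ) : ℝ := 1 / (c m + x)

lemma PF_pos_lt {w : ℝ} (h0 : 0 ≤ w) (h : w < q) (m : ℕ) :
    PF w 1 (2 * (m : ℤ) + 1) = (1 - w ^ 2) / 2 * (av w m - av w (m + 1)) := by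
  have h' : w < gg ^ 2 := h
  have hm : (0:ℝ) ≤ m := m.cast_nonneg
  rw [PF, if_pos h', av, av, c_succ]
  cases m with
  | zero => simp [c]; field_simp; ring
  | succ k =>
    have hi : ¬ ((2 * ((k + 1 : ℕ) : ℤ) + 1) = 1) := by omega
    have hk : (0:ℝ) ≤ k := k.cast_nonneg
    rw [if_neg hi, c_succ]
    push_cast
    have h1 : 2 * (k:ℝ) + 2 + w ≠ 0 := by positivity
    have h2 : 2 * ((k:ℝ) + 1) + 2 + w ≠ 0 := by positivity
    have e1 : (2 * ((k:ℝ) + 1) + 1 - 1 + 0 + 1 * w) = 2 * k + 2 + w := by ring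
    have e2 : (2 * ((k:ℝ) + 1) + 1 + 1 + 1 * w) = 2 * (k + 1) + 2 + w := by ring
    rw [e1, e2]
    field_simp
    ring

lemma PF_neg_lt {w : ℝ} (h : w < q) (m : ℕ) :
    PF w (-1) (2 * (m : ℤ) + 1) = (1 - w ^ 2) / 2 * (av (-w) m - av (-w) (m + 1)) := by
  have h' : w < gg ^ 2 := h
  have hm : (0:ℝ) ≤ m := m.cast_nonneg
  have hq := q_lt
  rw [PF, if_pos h', av, av, c_succ]
  cases m with
  | zero =>
    have h1 : 1 + -w ≠ 0 := by linarith
    have h2 : 1 + 1 + -w ≠ 0 := by linarith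
    have h3 : 2 + -w ≠ 0 := by linarith
    simp [c]; field_simp; ring
  | succ k =>
    have hi : ¬ ((2 * ((k + 1 : ℕ) : ℤ) + 1) = 1) := by omega
    have hk : (0:ℝ) ≤ k := k.cast_nonneg
    rw [if_neg hi, c_succ]
    push_cast
    have h1 : 2 * (k:ℝ) + 2 + -w ≠ 0 := by linarith
    have h2 : 2 * ((k:ℝ) + 1) + 2 + -w ≠ 0 := by linarith
    have e1 : (2 * ((k:ℝ) + 1) + 1 - 1 + 0 + -1 * w) = 2 * k + 2 + -w := by ring
    have e2 : (2 * ((k:ℝ) + 1) + 1 + 1 + -1 * w) = 2 * (k + 1) + 2 + -w := by ring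
    rw [e1, e2]
    have e3 : 2 * ((k:ℝ) + 1) + 2 + -w = (2 * (k:ℝ) + 2 + -w) + 2 := by ring
    rw [e3] at h2 ⊢
    generalize 2 * (k:ℝ) + 2 + -w = A at h1 h2 ⊢
    field_simp
    ring

lemma PF_pos_ge {w : ℝ} (h0 : 0 ≤ w) (h : q ≤ w) (m : ℕ) :
    PF w 1 (2 * (m : ℤ) + 1) = (1 + w) * (av w m - av w (m + 1)) := by
  have h' : ¬ w < gg ^ 2 := not_lt.2 h
  have hm : (0:ℝ) ≤ m := m.cast_nonneg
  rw [PF, if_neg h', av, av, c_succ]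
  cases m with
  | zero => simp [c]; field_simp; ring
  | succ k =>
    have hi : ¬ ((2 * ((k + 1 : ℕ) : ℤ) + 1) = 1) := by omega
    have hk : (0:ℝ) ≤ k := k.cast_nonneg
    rw [if_neg hi, c_succ]
    push_cast
    have h1 : 2 * (k:ℝ) + 2 + w ≠ 0 := by positivity
    have h2 : 2 * ((k:ℝ) + 1) + 2 + w ≠ 0 := by positivity
    have e1 : (2 * ((k:ℝ) + 1) + 1 - 1 + 0 + w) = 2 * k + 2 + w := by ring
    have e2 : (2 * ((k:ℝ) + 1) + 1 + 1 + w) = 2 * (k + 1) + 2 + w := by ring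
    rw [e1, e2]
    field_simp
    ring_nf

lemma PF_neg_ge {w : ℝ} (h : q ≤ w) (m : ℕ) : PF w (-1) (2 * (m : ℤ) + 1) = 0 := by
  have h' : ¬ w < gg ^ 2 := not_lt.2 h
  rw [PF, if_neg h']
  simp

lemma uF_pos (w : ℝ) (m : ℕ) : uF w 1 (2 * (m : ℤ) + 1) = 1 / (2 * m + 1 + w) := by
  simp [uF]

lemma uF_neg_lt {w : ℝ} (h : w < q) (m : ℕ) :
    uF w (-1) (2 * (m : ℤ) + 1) = 1 / (2 * m + 1 - w) := by
  have h' : w < gg ^ 2 := h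
  rw [uF, if_neg (by norm_num), if_pos h']
  push_cast; ring

lemma uF_neg_ge {w : ℝ} (h : q ≤ w) (m : ℕ) :
    uF w (-1) (2 * (m : ℤ) + 1) = 1 / (2 * m + 1 - q) := by
  have h' : ¬ w < gg ^ 2 := not_lt.2 h
  rw [uF, if_neg (by norm_num), if_neg h']
  push_cast; unfold q; ring

lemma frac_mem {x : ℝ} (m : ℕ) (h1 : -q ≤ x) : 1 / (2 * (m:ℝ) + 1 + x) ∈ Icc 0 G := by
  have hm : (0:ℝ) ≤ m := m.cast_nonneg
  have hq := q_lt
  have hp : 0 < 2 * (m:ℝ) + 1 + x := by linarith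
  refine ⟨by positivity, ?_⟩
  rw [div_le_iff₀ hp, G_eq]
  nlinarith [q_sq, mul_nonneg hm hm, mul_nonneg hm (sub_nonneg.2 hq.le)]

lemma uF_pos_mem {w : ℝ} (hw : w ∈ Icc 0 G) (m : ℕ) :
    uF w 1 (2 * (m : ℤ) + 1) ∈ Icc 0 G := by
  rw [uF_pos]; exact frac_mem m (by linarith [hw.1, lt_q])

lemma uF_neg_mem {w : ℝ} (m : ℕ) :
    uF w (-1) (2 * (m : ℤ) + 1) ∈ Icc 0 G := by
  rcases lt_or_ge w q with h | h
  · rw [uF_neg_lt h, sub_eq_add_neg]; exact frac_mem m (by linarith)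
  · rw [uF_neg_ge h, sub_eq_add_neg]; exact frac_mem m le_rfl

lemma av_anti {x : ℝ} (hx : -1 < x) : Antitone (av x) := by
  refine antitone_nat_of_succ_le fun m => ?_
  unfold av
  have := c_pos m
  have := c_le m
  exact one_div_le_one_div_of_le (by linarith) (by linarith)

lemma av_tendsto (x : ℝ) : Tendsto (av x) atTop (nhds 0) := by
  unfold av
  simp_rw [one_div]
  refine Tendsto.inv_tendsto_atTop ?_
  refine tendsto_atTop_add_const_right _ _ ?_
  refine tendsto_atTop_mono (f := fun m : ℕ => (m : ℝ)) (fun m => ?_) tendsto_natCast_atTop_atTop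
  unfold c
  split_ifs with h
  · simp [h]
  · have : (0:ℝ) ≤ m := m.cast_nonneg
    linarith

/-- telescoping sums -/
lemma av_hasSum {x : ℝ} (hx : -1 < x) (k : ℕ) :
    HasSum (fun m => if k ≤ m then av x m - av x (m + 1) else 0) (av x k) := by
  have hanti := av_anti hx
  rw [hasSum_iff_tendsto_nat_of_nonneg]
  · have : ∀ m, (if k ≤ m then av x m - av x (m + 1) else 0)
        = av x (max m k) - av x (max (m + 1) k) := by
      intro m
      split_ifs with h
      · rw [max_eq_left h, max_eq_left (by omega)]
      · rw [max_eq_right (by omega), max_eq_right (by omega), sub_self]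
    simp_rw [this]
    simp_rw [fun n => Finset.sum_range_sub' (fun m => av x (max m k)) n]
    have h2 : Tendsto (fun n => av x (max n k)) atTop (nhds 0) :=
      (av_tendsto x).comp (tendsto_atTop_mono (fun n => le_max_left n k) tendsto_id)
    simpa using h2.const_sub (av x (max 0 k))
  · intro m
    split_ifs
    · exact sub_nonneg.2 (hanti (Nat.le_succ m))
    · exact le_rfl

lemma PF_nonneg_pos {w : ℝ} (hw : w ∈ Icc 0 G) (m : ℕ) : 0 ≤ PF w 1 (2 * (m : ℤ) + 1) := by
  have h1 := sub_nonneg.2 (av_anti (x := w) (by linarith [hw.1]) (Nat.le_succ m))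
  rcases lt_or_ge w q with h | h
  · rw [PF_pos_lt hw.1 h]
    refine mul_nonneg ?_ h1
    nlinarith [hw.1, q_lt]
  · rw [PF_pos_ge hw.1 h]
    exact mul_nonneg (by linarith [hw.1]) h1

lemma PF_nonneg_neg {w : ℝ} (hw : w ∈ Icc 0 G) (m : ℕ) : 0 ≤ PF w (-1) (2 * (m : ℤ) + 1) := by
  rcases lt_or_ge w q with h | h
  · have h1 := sub_nonneg.2 (av_anti (x := -w) (by linarith [q_lt]) (Nat.le_succ m))
    rw [PF_neg_lt h]
    refine mul_nonneg ?_ h1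
    nlinarith [hw.1, q_lt]
  · rw [PF_neg_ge h]

lemma Qiter_succ_apply (n : ℕ) (w : ℝ) {B : Set ℝ} (hB : MeasurableSet B) :
    Qiter (n + 1) w B = ∑' m : ℕ,
      (ENNReal.ofReal (PF w 1 (2 * (m : ℤ) + 1)) * Qiter n (uF w 1 (2 * (m : ℤ) + 1)) B +
      ENNReal.ofReal (PF w (-1) (2 * (m : ℤ) + 1)) * Qiter n (uF w (-1) (2 * (m : ℤ) + 1)) B) := by
  rw [Qiter, Measure.sum_apply _ hB]
  simp

lemma Qiter_one_apply (w : ℝ) {B : Set ℝ} (hB : MeasurableSet B) :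
    Qiter 1 w B = ∑' m : ℕ,
      (ENNReal.ofReal (if uF w 1 (2 * (m : ℤ) + 1) ∈ B then PF w 1 (2 * (m : ℤ) + 1) else 0) +
      ENNReal.ofReal (if uF w (-1) (2 * (m : ℤ) + 1) ∈ B then PF w (-1) (2 * (m : ℤ) + 1) else 0)) := by
  rw [Qiter_succ_apply 0 w hB]
  congr 1; ext m
  simp only [Qiter, Measure.dirac_apply' _ hB, indicator]
  congr 1
  · split_ifs <;> simp
  · split_ifs <;> simp

lemma Qiter_comp (n : ℕ) (w : ℝ) {B : Set ℝ} (hB : MeasurableSet B) :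
    Qiter (n + 1) w B = ∫⁻ x, Qiter 1 x B ∂(Qiter n w) := by
  induction n generalizing w with
  | zero =>
    rw [Qiter]
    rw [lintegral_dirac]
  | succ n ih =>
    rw [Qiter_succ_apply (n + 1) w hB]
    conv_rhs => rw [Qiter]
    rw [lintegral_sum_measure]
    congr 1; ext m
    rw [lintegral_add_measure, lintegral_smul_measure, lintegral_smul_measure, ih, ih]
    rfl

lemma Qiter_one_lt {w : ℝ} (h0 : 0 ≤ w) (h : w < q) {B : Set ℝ} (hB : MeasurableSet B)
    (i j : ℕ) (hi : ∀ m : ℕ, 1 / (2 * (m:ℝ) + 1 + w) ∈ B ↔ i ≤ m)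
    (hj : ∀ m : ℕ, 1 / (2 * (m:ℝ) + 1 - w) ∈ B ↔ j ≤ m) :
    Qiter 1 w B = ENNReal.ofReal ((1 - w ^ 2) / 2 * (1 / (c i + w) + 1 / (c j - w))) := by
  have hq := q_lt
  have hw : w ∈ Icc 0 G := ⟨h0, by rw [G_eq]; linarith⟩
  rw [Qiter_one_apply w hB]
  have s1 := (av_hasSum (x := w) (by linarith) i).mul_left ((1 - w ^ 2) / 2)
  have s2 := (av_hasSum (x := -w) (by linarith) j).mul_left ((1 - w ^ 2) / 2)
  have s := s1.add s2
  rw [← mul_add] at s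
  have hs := s.tsum_eq
  rw [sub_eq_add_neg (c j) w]
  change _ = ENNReal.ofReal ((1 - w ^ 2) / 2 * (av w i + av (-w) j))
  rw [← hs, ENNReal.ofReal_tsum_of_nonneg _ s.summable]
  · congr 1; ext m
    rw [← ENNReal.ofReal_add]
    · congr 1
      rw [uF_pos, uF_neg_lt h, PF_pos_lt h0 h, PF_neg_lt h]
      simp only [hi, hj, mul_ite, mul_zero]
    · split_ifs
      exacts [PF_nonneg_pos hw m, le_rfl]
    · split_ifs
      exacts [PF_nonneg_neg hw m, le_rfl]
  · intro m
    have h1 := sub_nonneg.2 (av_anti (x := -w) (by linarith [q_lt]) (Nat.le_succ m))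
    have h2 := sub_nonneg.2 (av_anti (x := w) (by linarith [q_lt]) (Nat.le_succ m))
    have h3 : 0 ≤ (1 - w ^ 2) / 2 := by nlinarith
    refine add_nonneg (mul_nonneg h3 ?_) (mul_nonneg h3 ?_)
    · split_ifs
      exacts [h2, le_rfl]
    · split_ifs
      exacts [h1, le_rfl]

lemma Qiter_one_ge {w : ℝ} (hw : w ∈ Icc 0 G) (h : q ≤ w) {B : Set ℝ} (hB : MeasurableSet B)
    (i : ℕ) (hi : ∀ m : ℕ, 1 / (2 * (m:ℝ) + 1 + w) ∈ B ↔ i ≤ m) :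
    Qiter 1 w B = ENNReal.ofReal ((1 + w) * (1 / (c i + w))) := by
  have hq := q_lt
  have h0 := hw.1
  rw [Qiter_one_apply w hB]
  have s := (av_hasSum (x := w) (by linarith) i).mul_left (1 + w)
  have hs := s.tsum_eq
  change _ = ENNReal.ofReal ((1 + w) * av w i)
  rw [← hs, ENNReal.ofReal_tsum_of_nonneg _ s.summable]
  · congr 1; ext m
    rw [PF_neg_ge h, ite_self, ENNReal.ofReal_zero, add_zero]
    congr 1
    rw [uF_pos, PF_pos_ge h0 h]
    simp only [hi, mul_ite, mul_zero]
  · intro m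
    have h2 := sub_nonneg.2 (av_anti (x := w) (by linarith) (Nat.le_succ m))
    refine mul_nonneg (by linarith) ?_
    split_ifs
    exacts [h2, le_rfl]

lemma Qiter_one_univ {w : ℝ} (hw : w ∈ Icc 0 G) : Qiter 1 w univ = 1 := by
  rcases lt_or_ge w q with h | h
  · rw [Qiter_one_lt hw.1 h MeasurableSet.univ 0 0 (by simp) (by simp), c_zero]
    have h1 : 1 + w ≠ 0 := by linarith [hw.1]
    have h2 : 1 - w ≠ 0 := by linarith [q_lt]
    rw [← ENNReal.ofReal_one]; congr 1
    field_simp; ring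
  · rw [Qiter_one_ge hw h MeasurableSet.univ 0 (by simp), c_zero]
    have h1 : 1 + w ≠ 0 := by linarith [hw.1]
    rw [← ENNReal.ofReal_one]; congr 1
    field_simp

lemma Qiter_compl (n : ℕ) {w : ℝ} (hw : w ∈ Icc 0 G) : Qiter n w (Icc 0 G)ᶜ = 0 := by
  induction n generalizing w with
  | zero =>
    rw [Qiter, Measure.dirac_apply' _ measurableSet_Icc.compl]
    exact indicator_of_notMem (by simpa using hw) _
  | succ n ih =>
    rw [Qiter_succ_apply n w measurableSet_Icc.compl]
    simp [ih (uF_pos_mem hw _), ih (uF_neg_mem _)]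

lemma Qiter_univ (n : ℕ) {w : ℝ} (hw : w ∈ Icc 0 G) : Qiter n w univ = 1 := by
  induction n generalizing w with
  | zero => rw [Qiter]; simp
  | succ n ih =>
    rw [Qiter_succ_apply n w MeasurableSet.univ]
    have := Qiter_one_univ hw
    rw [Qiter_one_apply w MeasurableSet.univ] at this
    simpa [ih (uF_pos_mem hw _), ih (uF_neg_mem _)] using this

end OCF

namespace OCF

noncomputable def dens (w : ℝ) : ℝ := if w < q then 1 / (1 + w) + 1 / (1 - w) else 1 / (1 + w)
noncomputable def c0 : ℝ := (3 * Real.log G)⁻¹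

lemma Qinf_eq : Qinf = (volume.restrict (Set.Icc (0 : ℝ) G)).withDensity
    (fun w => ENNReal.ofReal (c0 * dens w)) := rfl

lemma dens_meas : Measurable dens := by
  unfold dens
  exact Measurable.ite measurableSet_Iio (by fun_prop) (by fun_prop)

lemma logG_pos : 0 < Real.log G := Real.log_pos (by rw [G_eq]; linarith [q_lt])

lemma c0_pos : 0 < c0 := by
  have := logG_pos
  unfold c0; positivity

lemma dens_nonneg {w : ℝ} (h : 0 ≤ w) : 0 ≤ dens w := by
  unfold dens
  split_ifs with h1
  · have : 0 < 1 - w := by linarith [q_lt]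
    positivity
  · positivity

lemma q_inv : 1 / (3 - q) = q := by
  have := q_lt
  rw [div_eq_iff (by linarith)]; nlinarith [q_sq]

/-- the key identity -/
lemma dens_key (m : ℕ) {s : ℝ} (h1 : -q < s) (h2 : s < G) :
    (1 / (2 * (m:ℝ) + 1 + s)) ^ 2 * dens (1 / (2 * (m:ℝ) + 1 + s)) = av s m - av s (m + 1) := by
  have hq := q_lt
  rw [G_eq] at h2
  cases m with
  | zero =>
    have hx : q < 1 / (2 * ((0:ℕ):ℝ) + 1 + s) := by
      rw [← q_inv]; push_cast
      exact one_div_lt_one_div_of_lt (by linarith) (by linarith)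
    rw [dens, if_neg (not_lt.2 hx.le), av, av, c_zero, c_succ]
    push_cast
    have e1 : 2 * (0:ℝ) + 1 + s = 1 + s := by ring
    have e2 : 2 * (0:ℝ) + 2 + s = 2 + s := by ring
    rw [e1, e2]
    have a1 : 1 + s ≠ 0 := by linarith
    have a3 : 2 + s ≠ 0 := by linarith
    have a4 : 1 + 1 / (1 + s) = (2 + s) / (1 + s) := by
      field_simp; ring
    rw [a4]
    field_simp
    ring
  | succ k =>
    have hk : (0:ℝ) ≤ k := k.cast_nonneg
    have hx : 1 / (2 * ((k + 1 : ℕ):ℝ) + 1 + s) < q := by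
      conv_rhs => rw [← q_inv]
      push_cast
      exact one_div_lt_one_div_of_lt (by linarith) (by linarith)
    rw [dens, if_pos hx, av, av, c_succ, c_succ]
    push_cast
    have e1 : 2 * (k:ℝ) + 2 + s = 2 * (k + 1) + 1 + s - 1 := by ring
    have e2 : 2 * ((k:ℝ) + 1) + 2 + s = 2 * (k + 1) + 1 + s + 1 := by ring
    rw [e1, e2]
    have hA : 1 < 2 * ((k:ℝ) + 1) + 1 + s := by linarith
    generalize 2 * ((k:ℝ) + 1) + 1 + s = A at hA ⊢
    have b1 : A ≠ 0 := by linarith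
    have b2 : A - 1 ≠ 0 := by linarith
    have b3 : A + 1 ≠ 0 := by linarith
    have b4 : 1 + 1 / A = (A + 1) / A := by field_simp
    have b5 : 1 - 1 / A = (A - 1) / A := by field_simp
    rw [b4, b5]
    field_simp
    ring

noncomputable def fB (B : Set ℝ) (x : ℝ) : ℝ≥0∞ := B.indicator (fun x => ENNReal.ofReal (c0 * dens x)) x

lemma fB_meas {B : Set ℝ} (hB : MeasurableSet B) : Measurable (fB B) := by
  unfold fB
  exact Measurable.indicator (by have := dens_meas; fun_prop) hB

noncomputable def tp (B : Set ℝ) (m : ℕ) (w : ℝ) : ℝ≥0∞ :=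
  if 1 / (2 * (m:ℝ) + 1 + w) ∈ B then ENNReal.ofReal (c0 * (av w m - av w (m + 1))) else 0

lemma tp_meas {B : Set ℝ} (hB : MeasurableSet B) (m : ℕ) : Measurable (tp B m) := by
  unfold tp av
  refine Measurable.ite ?_ (by fun_prop) measurable_const
  have : Measurable fun w : ℝ => 1 / (2 * (m:ℝ) + 1 + w) := by fun_prop
  exact this hB

lemma key_fB (B : Set ℝ) (m : ℕ) {s : ℝ} (h1 : -q < s) (h2 : s < G) :
    ENNReal.ofReal ((1 / (2 * (m:ℝ) + 1 + s)) ^ 2) * fB B (1 / (2 * (m:ℝ) + 1 + s)) = tp B m s := by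
  unfold fB tp
  by_cases h : 1 / (2 * (m:ℝ) + 1 + s) ∈ B
  · rw [indicator_of_mem h, if_pos h, ← ENNReal.ofReal_mul (by positivity), ← dens_key m h1 h2]
    congr 1; ring
  · rw [indicator_of_notMem h, if_neg h, mul_zero]

lemma deriv_psi (m : ℕ) {e s : ℝ} (he : e ^ 2 = 1) (hs : -q < e * s) :
    HasDerivAt (fun w : ℝ => 1 / (2 * (m:ℝ) + 1 + e * w)) (-e * (1 / (2 * (m:ℝ) + 1 + e * s)) ^ 2) s := by
  have hm : (0:ℝ) ≤ m := m.cast_nonneg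
  have h0 : 2 * (m:ℝ) + 1 + e * s ≠ 0 := by linarith [q_lt]
  have h1 : HasDerivAt (fun w : ℝ => 2 * (m:ℝ) + 1 + e * w) (e * 1) s :=
    ((hasDerivAt_id s).const_mul e).const_add _
  have := h1.inv h0
  simp only [one_div]
  exact this.congr_deriv (by rw [div_eq_mul_inv, inv_pow]; ring)

lemma image_pos (m : ℕ) : (fun w : ℝ => 1 / (2 * (m:ℝ) + 1 + 1 * w)) '' Ico 0 G =
    Ioc (1 / (2 * (m:ℝ) + 1 + G)) (1 / (2 * (m:ℝ) + 1)) := by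
  have hm : (0:ℝ) ≤ m := m.cast_nonneg
  have hG : 0 < G := by rw [G_eq]; linarith [q_lt]
  ext x
  simp only [mem_image, mem_Ico, mem_Ioc]
  constructor
  · rintro ⟨w, ⟨h1, h2⟩, rfl⟩
    exact ⟨one_div_lt_one_div_of_lt (by linarith) (by linarith),
      one_div_le_one_div_of_le (by linarith) (by linarith)⟩
  · rintro ⟨h1, h2⟩
    have hx : 0 < x := lt_trans (by positivity) h1
    refine ⟨1 / x - (2 * m + 1), ⟨?_, ?_⟩, ?_⟩
    · rw [le_div_iff₀ (by positivity)] at h2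
      rw [sub_nonneg, le_div_iff₀ hx]; linarith
    · rw [div_lt_iff₀ (by positivity)] at h1
      rw [sub_lt_iff_lt_add, div_lt_iff₀ hx]; linarith
    · rw [one_mul, add_sub_cancel, one_div_one_div]

lemma image_neg (m : ℕ) : (fun w : ℝ => 1 / (2 * (m:ℝ) + 1 + (-1) * w)) '' Ioo 0 q =
    Ioo (1 / (2 * (m:ℝ) + 1)) (1 / (2 * (m:ℝ) + 1 - q)) := by
  have hm : (0:ℝ) ≤ m := m.cast_nonneg
  have hq := q_lt
  ext x
  simp only [mem_image, mem_Ioo]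
  constructor
  · rintro ⟨w, ⟨h1, h2⟩, rfl⟩
    exact ⟨one_div_lt_one_div_of_lt (by linarith) (by linarith),
      one_div_lt_one_div_of_lt (by linarith) (by linarith)⟩
  · rintro ⟨h1, h2⟩
    have hx : 0 < x := lt_trans (by positivity) h1
    refine ⟨(2 * m + 1) - 1 / x, ⟨?_, ?_⟩, ?_⟩
    · rw [div_lt_iff₀ (by positivity)] at h1
      rw [sub_pos, div_lt_iff₀ hx]; linarith
    · rw [lt_div_iff₀ (by linarith)] at h2
      rw [sub_lt_comm, lt_div_iff₀ hx]; linarith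
    · rw [← one_div_one_div x]; congr 1; simp

lemma inj_psi (m : ℕ) {e : ℝ} (he : e ^ 2 = 1) (s : Set ℝ) :
    InjOn (fun w : ℝ => 1 / (2 * (m:ℝ) + 1 + e * w)) s := by
  intro a _ b _ h
  simp only [one_div] at h
  have := inv_injective h
  have h3 : e * a = e * b := by linarith
  have : e ≠ 0 := by rintro rfl; norm_num at he
  exact mul_left_cancel₀ this h3

lemma lint_pos (B : Set ℝ) (m : ℕ) :
    ∫⁻ w in Icc 0 G, tp B m w = ∫⁻ x in Ioc (1 / (2 * (m:ℝ) + 1 + G)) (1 / (2 * (m:ℝ) + 1)), fB B x := by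
  rw [← image_pos, lintegral_image_eq_lintegral_abs_deriv_mul measurableSet_Ico
    (fun x hx => (deriv_psi m (e := 1) (by norm_num) (by linarith [hx.1, lt_q])).hasDerivWithinAt)
    (inj_psi m (by norm_num) _), restrict_Ico_eq_restrict_Icc]
  rw [← restrict_Ico_eq_restrict_Icc]
  refine setLIntegral_congr_fun measurableSet_Ico fun w hw => ?_
  rw [← key_fB B m (s := w) (by linarith [hw.1, lt_q]) hw.2]
  simp

lemma lint_neg (B : Set ℝ) (m : ℕ) :
    ∫⁻ w in Ioo 0 q, tp B m (-w) = ∫⁻ x in Ioc (1 / (2 * (m:ℝ) + 1)) (1 / (2 * (m:ℝ) + 1 - q)), fB B x := by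
  rw [← restrict_Ioo_eq_restrict_Ioc,
    ← image_neg, lintegral_image_eq_lintegral_abs_deriv_mul measurableSet_Ioo
    (fun x hx => (deriv_psi m (e := -1) (by norm_num) (by linarith [hx.2, lt_q])).hasDerivWithinAt)
    (inj_psi m (by norm_num) _)]
  refine setLIntegral_congr_fun measurableSet_Ioo fun w hw => ?_
  rw [← key_fB B m (s := -w) (by linarith [hw.2, lt_q]) (by rw [G_eq]; linarith [hw.1, q_lt])]
  simp

noncomputable def ep (m : ℕ) : ℝ := 1 / (2 * (m:ℝ) + 1 - q)

lemma ep_anti : Antitone ep := by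
  intro a b h
  unfold ep
  have : (a:ℝ) ≤ b := by exact_mod_cast h
  have ha : (0:ℝ) ≤ a := a.cast_nonneg
  exact one_div_le_one_div_of_le (by linarith [q_lt]) (by linarith)

lemma ep_zero : ep 0 = G := by
  unfold ep
  rw [G_eq]; push_cast
  rw [div_eq_iff (by linarith [q_lt])]; nlinarith [q_sq]

lemma ep_succ (m : ℕ) : ep (m + 1) = 1 / (2 * (m:ℝ) + 1 + G) := by
  unfold ep
  rw [G_eq]; push_cast; congr 1; ring

lemma ep_pos (m : ℕ) : 0 < ep m := by
  have hm : (0:ℝ) ≤ m := m.cast_nonneg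
  have := q_lt
  unfold ep
  exact one_div_pos.2 (by linarith)

lemma ep_union : ⋃ m : ℕ, Ioc (ep (m + 1)) (ep m) = Ioc 0 G := by
  ext x
  simp only [mem_iUnion, mem_Ioc]
  constructor
  · rintro ⟨m, h1, h2⟩
    exact ⟨(ep_pos _).trans h1, h2.trans (ep_zero ▸ ep_anti (Nat.zero_le m))⟩
  · rintro ⟨h1, h2⟩
    have hex : ∃ m, ep (m + 1) < x := by
      obtain ⟨m, hm⟩ := exists_nat_gt (1 / x)
      refine ⟨m, ?_⟩
      have h0 : (0:ℝ) ≤ m := m.cast_nonneg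
      rw [ep, div_lt_iff₀ (by push_cast; linarith [q_lt])]
      rw [div_lt_iff₀ h1] at hm
      push_cast
      nlinarith [q_lt]
    classical
    refine ⟨Nat.find hex, Nat.find_spec hex, ?_⟩
    rcases Nat.eq_zero_or_pos (Nat.find hex) with h | h
    · rw [h, ep_zero]; exact h2
    · have := Nat.find_min hex (Nat.sub_lt h one_pos)
      rw [show Nat.find hex - 1 + 1 = Nat.find hex by omega] at this
      exact not_lt.1 this

lemma Qinf_apply {B : Set ℝ} (hB : MeasurableSet B) : Qinf B = ∫⁻ x in Ioc 0 G, fB B x := by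
  rw [Qinf_eq, withDensity_apply _ hB, ← lintegral_indicator hB, ← restrict_Ioc_eq_restrict_Icc]
  rfl

lemma Qinf_inv {B : Set ℝ} (hB : MeasurableSet B) : ∫⁻ w, Qiter 1 w B ∂Qinf = Qinf B := by
  have hm : Measurable fun w => ENNReal.ofReal (c0 * dens w) := by have := dens_meas; fun_prop
  rw [Qinf_apply hB, Qinf_eq, lintegral_withDensity_eq_lintegral_mul_non_measurable _ hm
    (Eventually.of_forall fun x => ENNReal.ofReal_lt_top)]
  have hc := c0_pos
  have step : ∫⁻ w in Icc 0 G, ((fun w => ENNReal.ofReal (c0 * dens w)) * fun w => Qiter 1 w B) w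
      = ∫⁻ w in Icc 0 G, ∑' m : ℕ, (tp B m w + (Ioo 0 q).indicator (fun w => tp B m (-w)) w) := by
    have h0 : ∀ᵐ w : ℝ ∂(volume.restrict (Icc 0 G)), w ≠ 0 :=
      ae_restrict_of_ae (by simp [ae_iff])
    refine lintegral_congr_ae ?_
    filter_upwards [h0, ae_restrict_mem measurableSet_Icc] with w hw0 hw
    have hwp : 0 < w := lt_of_le_of_ne hw.1 (Ne.symm hw0)
    simp only [Pi.mul_apply]
    rw [Qiter_one_apply w hB, ← ENNReal.tsum_mul_left]
    congr 1; ext m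
    rw [mul_add, ← ENNReal.ofReal_mul (mul_nonneg hc.le (dens_nonneg hw.1)),
      ← ENNReal.ofReal_mul (mul_nonneg hc.le (dens_nonneg hw.1))]
    congr 1
    · rw [uF_pos, tp]
      split_ifs with hmem
      · congr 1
        rw [mul_assoc]; congr 1
        rcases lt_or_ge w q with h | h
        · rw [PF_pos_lt hw.1 h, dens, if_pos h]
          have : 1 - w ≠ 0 := by linarith [q_lt]
          have : 1 + w ≠ 0 := by linarith
          field_simp; ring
        · rw [PF_pos_ge hw.1 h, dens, if_neg (not_lt.2 h)]
          have : 1 + w ≠ 0 := by linarith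
          field_simp
      · simp
    · rcases lt_or_ge w q with h | h
      · rw [indicator_of_mem (show w ∈ Ioo 0 q from ⟨hwp, h⟩), uF_neg_lt h, tp, ← sub_eq_add_neg]
        split_ifs with hmem
        · congr 1
          rw [mul_assoc]; congr 1
          rw [PF_neg_lt h, dens, if_pos h]
          have : 1 - w ≠ 0 := by linarith [q_lt]
          have : 1 + w ≠ 0 := by linarith
          field_simp; ring
        · simp
      · rw [indicator_of_notMem (fun hh => not_lt.2 h hh.2), PF_neg_ge h]
        simp
  have hd : Pairwise (Function.onFun Disjoint fun m : ℕ => Ioc (ep (m + 1)) (ep m)) :=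
    ep_anti.pairwise_disjoint_on_Ioc_succ
  rw [step, lintegral_tsum, ← ep_union,
    lintegral_iUnion (fun m => measurableSet_Ioc) hd]
  · congr 1; ext m
    rw [lintegral_add_left (tp_meas hB m), lintegral_indicator measurableSet_Ioo,
      Measure.restrict_restrict measurableSet_Ioo,
      inter_eq_self_of_subset_left (show Ioo 0 q ⊆ Icc 0 G from fun x hx =>
        ⟨hx.1.le, by rw [G_eq]; linarith [hx.2, q_lt]⟩), lint_pos, lint_neg,
      ← lintegral_union measurableSet_Ioc, Ioc_union_Ioc_eq_Ioc, ← ep_succ]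
    · rfl
    · have hm : (0:ℝ) ≤ m := m.cast_nonneg
      exact one_div_le_one_div_of_le (by linarith) (by rw [G_eq]; linarith [q_lt])
    · have hm : (0:ℝ) ≤ m := m.cast_nonneg
      exact one_div_le_one_div_of_le (by linarith [q_lt]) (by linarith [lt_q])
    · exact Ioc_disjoint_Ioc_of_le le_rfl
  · intro m
    have h1 := tp_meas hB m
    exact (h1.add ((h1.comp measurable_neg).indicator measurableSet_Ioo)).aemeasurable

lemma lint_dens (a b : ℝ) (hab : a ≤ b) (f F : ℝ → ℝ) (hf : ContinuousOn f (Icc a b))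
    (hpos : ∀ x ∈ Icc a b, 0 ≤ f x)
    (hF : ∀ x ∈ Icc a b, HasDerivAt F (f x) x) :
    ∫⁻ x in Ioc a b, ENNReal.ofReal (f x) = ENNReal.ofReal (F b - F a) := by
  have hi : IntervalIntegrable f volume a b := by
    refine ContinuousOn.intervalIntegrable ?_
    rwa [uIcc_of_le hab]
  rw [← ofReal_integral_eq_lintegral_ofReal, ← intervalIntegral.integral_of_le hab,
    intervalIntegral.integral_eq_sub_of_hasDerivAt (by rwa [uIcc_of_le hab]) hi]
  · exact (intervalIntegrable_iff_integrableOn_Ioc_of_le hab).1 hi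
  · filter_upwards [ae_restrict_mem measurableSet_Ioc] with x hx
    exact hpos x (Ioc_subset_Icc_self hx)

lemma lint1 : ∫⁻ x in Ioc 0 q, ENNReal.ofReal (c0 * dens x) =
    ENNReal.ofReal (c0 * (Real.log (1 + q) - Real.log (1 - q))) := by
  have hc := c0_pos
  have hq := q_lt
  have hq' := lt_q
  rw [← restrict_Ioo_eq_restrict_Ioc]
  have : ∫⁻ x in Ioo 0 q, ENNReal.ofReal (c0 * dens x)
      = ∫⁻ x in Ioo 0 q, ENNReal.ofReal (c0 * (1 / (1 + x) + 1 / (1 - x))) := by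
    refine setLIntegral_congr_fun measurableSet_Ioo fun w hw => ?_
    rw [dens, if_pos hw.2]
  rw [this, restrict_Ioo_eq_restrict_Ioc, lint_dens 0 q (by linarith) _
    (fun x => c0 * (Real.log (1 + x) - Real.log (1 - x)))]
  · simp
  · refine ContinuousOn.const_mul ?_ _
    refine ContinuousOn.add ?_ ?_
    · exact continuousOn_const.div (by fun_prop) (fun x hx => by linarith [hx.1])
    · exact continuousOn_const.div (by fun_prop) (fun x hx => by linarith [hx.2])
  · intro x hx
    have : 0 < 1 - x := by linarith [hx.2]
    have : 0 < 1 + x := by linarith [hx.1]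
    positivity
  · intro x hx
    refine HasDerivAt.const_mul _ ?_
    have h1 : HasDerivAt (fun x : ℝ => 1 + x) 1 x := (hasDerivAt_id x).const_add 1
    have h2 : HasDerivAt (fun x : ℝ => 1 - x) (-1) x := (hasDerivAt_id x).const_sub 1
    have := (h1.log (by linarith [hx.1])).sub (h2.log (by linarith [hx.2]))
    exact this.congr_deriv (by rw [neg_div, sub_neg_eq_add])

lemma lint2 : ∫⁻ x in Ioc q G, ENNReal.ofReal (c0 * dens x) =
    ENNReal.ofReal (c0 * Real.log (1 + G) - c0 * Real.log (1 + q)) := by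
  have hc := c0_pos
  have hq := q_lt
  have hq' := lt_q
  have : ∫⁻ x in Ioc q G, ENNReal.ofReal (c0 * dens x)
      = ∫⁻ x in Ioc q G, ENNReal.ofReal (c0 * (1 / (1 + x))) := by
    refine setLIntegral_congr_fun measurableSet_Ioc fun w hw => ?_
    rw [dens, if_neg (not_lt.2 hw.1.le)]
  rw [this, lint_dens q G (by rw [G_eq]; linarith) _
    (fun x => c0 * (Real.log (1 + x)))]
  · refine ContinuousOn.const_mul ?_ _
    exact continuousOn_const.div (by fun_prop) (fun x hx => by linarith [hx.1])
  · intro x hx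
    have : 0 < 1 + x := by linarith [hx.1]
    positivity
  · intro x hx
    refine HasDerivAt.const_mul _ ?_
    have h1 : HasDerivAt (fun x : ℝ => 1 + x) 1 x := (hasDerivAt_id x).const_add 1
    exact h1.log (by linarith [hx.1])

lemma log_one_sub : Real.log (1 - q) = - Real.log G := by
  have : 1 - q = G⁻¹ := by
    refine eq_inv_of_mul_eq_one_left ?_
    rw [G_eq]; nlinarith [q_sq]
  rw [this, Real.log_inv]

lemma log_one_G : Real.log (1 + G) = 2 * Real.log G := by
  have : 1 + G = G ^ 2 := by
    rw [G_eq]; nlinarith [q_sq]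
  rw [this, Real.log_pow]; norm_num

lemma log_one_q : 0 ≤ Real.log (1 + q) ∧ Real.log (1 + q) ≤ Real.log G :=
  ⟨Real.log_nonneg (by linarith [lt_q]),
    Real.log_le_log (by linarith [lt_q]) (by rw [G_eq]; linarith [q_lt])⟩

lemma Qinf_univ : Qinf univ = 1 := by
  rw [Qinf_apply MeasurableSet.univ]
  simp only [fB, indicator_univ]
  have hq := q_lt
  have hq' := lt_q
  rw [← Ioc_union_Ioc_eq_Ioc (b := q) (by linarith) (by rw [G_eq]; linarith),
    lintegral_union measurableSet_Ioc (Ioc_disjoint_Ioc_of_le le_rfl), lint1, lint2]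
  have h := log_one_q
  have hc := c0_pos
  have hG := logG_pos
  rw [← ENNReal.ofReal_add, ← ENNReal.ofReal_one]
  · congr 1
    rw [log_one_sub, log_one_G, c0]
    field_simp; ring
  · rw [log_one_sub]
    exact mul_nonneg hc.le (by linarith)
  · rw [log_one_G, ← mul_sub]
    exact mul_nonneg hc.le (by linarith)

lemma Qinf_q : (Qinf (Iio q)).toReal ∈ Icc (1/3 : ℝ) (2/3) := by
  rw [Qinf_apply measurableSet_Iio]
  have hq := q_lt
  have hq' := lt_q
  have : ∫⁻ x in Ioc 0 G, fB (Iio q) x = ∫⁻ x in Ioc 0 q, ENNReal.ofReal (c0 * dens x) := by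
    unfold fB
    rw [lintegral_indicator measurableSet_Iio, Measure.restrict_restrict measurableSet_Iio,
      ← restrict_Ioo_eq_restrict_Ioc]
    congr 2
    ext x
    simp only [mem_inter_iff, mem_Iio, mem_Ioc, mem_Ioo]
    rw [G_eq]
    constructor
    · rintro ⟨h1, h2, h3⟩; exact ⟨h2, h1⟩
    · rintro ⟨h1, h2⟩; exact ⟨h2, h1, by linarith⟩
  rw [this, lint1]
  have h := log_one_q
  have hG := logG_pos
  rw [log_one_sub, ENNReal.toReal_ofReal (mul_nonneg c0_pos.le (by linarith)), c0,
    inv_mul_eq_div, mem_Icc, le_div_iff₀ (by linarith), div_le_iff₀ (by linarith)]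
  constructor <;> linarith

lemma Qinf_compl : Qinf (Icc 0 G)ᶜ = 0 := by
  rw [Qinf_eq, withDensity_apply _ measurableSet_Icc.compl,
    Measure.restrict_restrict measurableSet_Icc.compl]
  simp

end OCF

namespace OCF

structure Ctx (μ ν : Measure ℝ) (a b : ℝ) : Prop where
  pμ : IsProbabilityMeasure μ
  pν : IsProbabilityMeasure ν
  cμ : μ (Icc 0 G)ᶜ = 0
  cν : ν (Icc 0 G)ᶜ = 0
  hb : ∀ B : Set ℝ, IsLowerSet B → |μ.real B - ν.real B| ≤ b
  ha : |μ.real (Iio q) - ν.real (Iio q)| ≤ a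

def EB (μ ν : Measure ℝ) (h : ℝ → ℝ) (C : ℝ) : Prop :=
  Integrable h μ ∧ Integrable h ν ∧ |∫ x, h x ∂μ - ∫ x, h x ∂ν| ≤ C

lemma lower_meas {B : Set ℝ} (h : IsLowerSet B) : MeasurableSet B := h.ordConnected.measurableSet

variable {μ ν : Measure ℝ} {a b : ℝ}

lemma Ctx.aeμ (c : Ctx μ ν a b) : ∀ᵐ x ∂μ, x ∈ Icc 0 G := c.cμ
lemma Ctx.aeν (c : Ctx μ ν a b) : ∀ᵐ x ∂ν, x ∈ Icc 0 G := c.cν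

lemma EB.mono {h : ℝ → ℝ} {C D : ℝ} (H : EB μ ν h C) (hCD : C ≤ D) : EB μ ν h D :=
  ⟨H.1, H.2.1, H.2.2.trans hCD⟩

lemma EB.add {h k : ℝ → ℝ} {C D : ℝ} (H : EB μ ν h C) (K : EB μ ν k D) :
    EB μ ν (fun x => h x + k x) (C + D) := by
  refine ⟨H.1.add K.1, H.2.1.add K.2.1, ?_⟩
  rw [integral_add H.1 K.1, integral_add H.2.1 K.2.1]
  have h1 := abs_le.1 H.2.2
  have h2 := abs_le.1 K.2.2
  rw [abs_le]; constructor <;> linarith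

lemma EB.const_mul {h : ℝ → ℝ} {C : ℝ} (H : EB μ ν h C) (r : ℝ) :
    EB μ ν (fun x => r * h x) (|r| * C) := by
  refine ⟨H.1.const_mul r, H.2.1.const_mul r, ?_⟩
  rw [integral_const_mul, integral_const_mul, ← mul_sub, abs_mul]
  exact mul_le_mul_of_nonneg_left H.2.2 (abs_nonneg r)

lemma EB.neg {h : ℝ → ℝ} {C : ℝ} (H : EB μ ν h C) : EB μ ν (fun x => - h x) C := by
  have := H.const_mul (-1)
  simpa using this

lemma EB.congr {h k : ℝ → ℝ} {C : ℝ} (c : Ctx μ ν a b) (H : EB μ ν h C)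
    (hk : ∀ x ∈ Icc 0 G, h x = k x) : EB μ ν k C := by
  have h1 : h =ᵐ[μ] k := by filter_upwards [c.aeμ] with x hx using hk x hx
  have h2 : h =ᵐ[ν] k := by filter_upwards [c.aeν] with x hx using hk x hx
  refine ⟨H.1.congr h1, H.2.1.congr h2, ?_⟩
  rw [← integral_congr_ae h1, ← integral_congr_ae h2]
  exact H.2.2

lemma EB.const (c : Ctx μ ν a b) (r : ℝ) : EB μ ν (fun _ => r) 0 := by
  have := c.pμ
  have := c.pν
  exact ⟨integrable_const r, integrable_const r, by simp⟩

lemma EB.ind (c : Ctx μ ν a b) : EB μ ν (fun x => if x < q then 1 else 0) a := by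
  have := c.pμ
  have := c.pν
  have e : (fun x => if x < q then (1:ℝ) else 0) = (Iio q).indicator (fun _ => 1) := by
    ext x; simp [indicator]
  rw [e]
  refine ⟨(integrable_const 1).indicator measurableSet_Iio,
    (integrable_const 1).indicator measurableSet_Iio, ?_⟩
  rw [integral_indicator measurableSet_Iio, integral_indicator measurableSet_Iio]
  simpa using c.ha

lemma real_anti (μ : Measure ℝ) [IsProbabilityMeasure μ] (f : ℝ → ℝ) :
    Antitone (fun t : ℝ => μ.real {x | t ≤ f x}) := by
  intro s t hst
  exact measureReal_mono (fun x (hx : t ≤ f x) => hst.trans hx)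

lemma real_int (μ : Measure ℝ) [IsProbabilityMeasure μ] (f : ℝ → ℝ) (V : ℝ) :
    IntegrableOn (fun t : ℝ => μ.real {x | t ≤ f x}) (Ioc 0 V) := by
  refine Measure.integrableOn_of_bounded (M := 1) (by simp)
    (real_anti μ f).measurable.aestronglyMeasurable ?_
  refine Eventually.of_forall fun t => ?_
  rw [Real.norm_of_nonneg measureReal_nonneg]
  exact measureReal_le_one

lemma EB.anti0 (c : Ctx μ ν a b) {f : ℝ → ℝ} (hf : Antitone f) {V : ℝ} (h0 : ∀ x, 0 ≤ f x)
    (hV : ∀ x, f x ≤ V) : EB μ ν f (V * b) := by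
  have := c.pμ
  have := c.pν
  have hV0 : 0 ≤ V := (h0 0).trans (hV 0)
  have i1 : ∀ (ρ : Measure ℝ) [IsProbabilityMeasure ρ], Integrable f ρ := by
    intro ρ _
    refine Integrable.of_bound (C := V) hf.measurable.aestronglyMeasurable ?_
    refine Eventually.of_forall fun t => ?_
    rw [Real.norm_of_nonneg (h0 t)]; exact hV t
  refine ⟨i1 μ, i1 ν, ?_⟩
  rw [(i1 μ).integral_eq_integral_Ioc_meas_le (Eventually.of_forall h0) (Eventually.of_forall hV),
    (i1 ν).integral_eq_integral_Ioc_meas_le (Eventually.of_forall h0) (Eventually.of_forall hV),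
    ← integral_sub (real_int μ f V) (real_int ν f V), ← Real.norm_eq_abs]
  refine (norm_setIntegral_le_of_norm_le_const (C := b) (by simp) ?_).trans ?_
  · intro t _
    rw [Real.norm_eq_abs]
    exact c.hb _ (fun x y hxy hx => le_trans (show t ≤ f x from hx) (hf hxy))
  · rw [measureReal_def, Real.volume_Ioc, sub_zero, ENNReal.toReal_ofReal hV0, mul_comm]

lemma EB.anti (c : Ctx μ ν a b) {f : ℝ → ℝ} (hf : AntitoneOn f (Icc 0 G)) {p r : ℝ}
    (h : ∀ x ∈ Icc 0 G, p ≤ f x ∧ f x ≤ r) : EB μ ν f ((r - p) * b) := by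
  have hG : 0 ≤ G := by rw [G_eq]; linarith [q_lt]
  have hmem : ∀ x : ℝ, max 0 (min G x) ∈ Icc 0 G := fun x =>
    ⟨le_max_left _ _, max_le hG (min_le_left _ _)⟩
  have h1 : EB μ ν (fun x => f (max 0 (min G x)) - p) ((r - p) * b) := by
    refine EB.anti0 c ?_ (fun x => ?_) (fun x => ?_)
    · intro x y hxy
      have := hf (hmem x) (hmem y) (max_le_max le_rfl (min_le_min le_rfl hxy))
      dsimp only; linarith
    · linarith [(h _ (hmem x)).1]
    · linarith [(h _ (hmem x)).2]
  have h2 := h1.add (EB.const c p)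
  rw [add_zero] at h2
  refine h2.congr c fun x hx => ?_
  rw [min_eq_right hx.2, max_eq_right hx.1]; ring

lemma EB.monot (c : Ctx μ ν a b) {f : ℝ → ℝ} (hf : MonotoneOn f (Icc 0 G)) {p r : ℝ}
    (h : ∀ x ∈ Icc 0 G, p ≤ f x ∧ f x ≤ r) : EB μ ν f ((r - p) * b) := by
  have h1 : EB μ ν (fun x => - f x) ((-p - -r) * b) :=
    EB.anti c hf.neg fun x hx => ⟨neg_le_neg (h x hx).2, neg_le_neg (h x hx).1⟩
  have := h1.neg
  simp only [neg_neg] at this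
  convert this using 1; ring

/-- first combination -/
lemma comboA (c : Ctx μ ν a b) {S : Set ℝ} (hS : IsUpperSet S) {H J T : ℝ → ℝ}
    {v V j J0 τ T1 : ℝ}
    (hH : AntitoneOn H (Ico 0 q)) (hHr : ∀ x ∈ Ico 0 q, v ≤ H x ∧ H x ≤ V)
    (hJ : AntitoneOn J (Ico 0 q)) (hJr : ∀ x ∈ Ico 0 q, j ≤ J x ∧ J x ≤ J0) (hj : 0 ≤ j)
    (hT : MonotoneOn T (Icc q G)) (hTr : ∀ x ∈ Icc q G, τ ≤ T x ∧ T x ≤ T1) :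
    EB μ ν (fun w => if w < q then H w + (if w ∈ S then J w else 0) else T w)
      (((V - v) + (J0 - j) + J0 + (T1 - τ)) * b + |v + j - τ| * a) := by
  have hq := q_lt
  have hq' := lt_q
  have hz : (0:ℝ) ∈ Ico 0 q := ⟨le_rfl, by linarith⟩
  have hzG : q ∈ Icc q G := ⟨le_rfl, by rw [G_eq]; linarith⟩
  have hvV : v ≤ V := (hHr 0 hz).1.trans (hHr 0 hz).2
  have hjJ : j ≤ J0 := (hJr 0 hz).1.trans (hJr 0 hz).2
  have hτT : τ ≤ T1 := (hTr q hzG).1.trans (hTr q hzG).2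
  have E1 : EB μ ν (fun w => if w < q then H w - v else 0) ((V - v - 0) * b) := by
    refine EB.anti c (fun x hx y hy hxy => ?_) (fun x hx => ?_)
    · split_ifs with h1 h2 h2
      · linarith [hH ⟨hx.1, h2⟩ ⟨hy.1, h1⟩ hxy]
      · exact absurd (lt_of_le_of_lt hxy h1) h2
      · linarith [(hHr x ⟨hx.1, h2⟩).1]
      · exact le_rfl
    · split_ifs with h1
      · constructor <;> linarith [(hHr x ⟨hx.1, h1⟩).1, (hHr x ⟨hx.1, h1⟩).2]
      · constructor <;> linarith
  have E2 : EB μ ν (fun w => if w < q then (if w ∈ S then J w else J0) - j else 0)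
      ((J0 - j - 0) * b) := by
    refine EB.anti c (fun x hx y hy hxy => ?_) (fun x hx => ?_)
    · by_cases h1 : y < q
      · have h2 : x < q := lt_of_le_of_lt hxy h1
        rw [if_pos h1, if_pos h2]
        by_cases h3 : x ∈ S
        · rw [if_pos h3, if_pos (hS hxy h3)]
          linarith [hJ ⟨hx.1, h2⟩ ⟨hy.1, h1⟩ hxy]
        · rw [if_neg h3]
          split_ifs
          · linarith [(hJr y ⟨hy.1, h1⟩).2]
          · exact le_rfl
      · rw [if_neg h1]
        split_ifs with h2 h3
        · linarith [(hJr x ⟨hx.1, h2⟩).1]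
        · linarith
        · exact le_rfl
    · split_ifs with h1 h2
      · constructor <;> linarith [(hJr x ⟨hx.1, h1⟩).1, (hJr x ⟨hx.1, h1⟩).2]
      · constructor <;> linarith
      · constructor <;> linarith
  have E3 : EB μ ν (fun w => if w < q ∧ w ∉ S then J0 else 0) ((J0 - 0) * b) := by
    refine EB.anti c (fun x hx y hy hxy => ?_) (fun x hx => ?_)
    · split_ifs with h1 h2 h2
      · exact le_rfl
      · exact absurd ⟨lt_of_le_of_lt hxy h1.1, fun h => h1.2 (hS hxy h)⟩ h2
      · linarith
      · exact le_rfl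
    · split_ifs with h1
      · constructor <;> linarith
      · constructor <;> linarith
  have E4 : EB μ ν (fun w => if w < q then 0 else T w - τ) ((T1 - τ - 0) * b) := by
    refine EB.monot c (fun x hx y hy hxy => ?_) (fun x hx => ?_)
    · split_ifs with h1 h2 h2
      · exact le_rfl
      · linarith [(hTr y ⟨not_lt.1 h2, hy.2⟩).1]
      · exact absurd (lt_of_le_of_lt hxy h2) h1
      · linarith [hT ⟨not_lt.1 h1, hx.2⟩ ⟨not_lt.1 h2, hy.2⟩ hxy]
    · split_ifs with h1
      · constructor <;> linarith
      · constructor <;> linarith [(hTr x ⟨not_lt.1 h1, hx.2⟩).1, (hTr x ⟨not_lt.1 h1, hx.2⟩).2]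
  have E := ((((E1.add E2).add E3.neg).add E4).add ((EB.ind c).const_mul (v + j - τ))).add (EB.const c τ)
  refine (E.congr c fun x hx => ?_).mono (le_of_eq (by ring))
  by_cases h1 : x < q
  · by_cases h2 : x ∈ S
    · simp [h1, h2]; ring
    · simp [h1, h2]; ring
  · simp [h1]

/-- second combination -/
lemma comboB (c : Ctx μ ν a b) {L : Set ℝ} (hL : IsLowerSet L) {H κ ω T : ℝ → ℝ}
    {v V κm ωm τ T1 : ℝ}
    (hH : AntitoneOn H (Ico 0 q)) (hHr : ∀ x ∈ Ico 0 q, v ≤ H x ∧ H x ≤ V)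
    (hκ : MonotoneOn κ (Ico 0 q)) (hκr : ∀ x ∈ Ico 0 q, 0 ≤ κ x ∧ κ x ≤ κm)
    (hω : MonotoneOn ω (Ico 0 q)) (hωr : ∀ x ∈ Ico 0 q, 0 ≤ ω x ∧ ω x ≤ ωm)
    (hT : MonotoneOn T (Icc q G)) (hTr : ∀ x ∈ Icc q G, τ ≤ T x ∧ T x ≤ T1) :
    EB μ ν (fun w => if w < q then H w - (if w ∈ L then 0 else κ w) + (if w ∈ L then 0 else ω w)
        else T w)
      (((V - v) + κm + ωm + (T1 - τ)) * b + |v - κm + ωm - τ| * a) := by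
  have hq := q_lt
  have hq' := lt_q
  have hz : (0:ℝ) ∈ Ico 0 q := ⟨le_rfl, by linarith⟩
  have hzG : q ∈ Icc q G := ⟨le_rfl, by rw [G_eq]; linarith⟩
  have hvV : v ≤ V := (hHr 0 hz).1.trans (hHr 0 hz).2
  have hτT : τ ≤ T1 := (hTr q hzG).1.trans (hTr q hzG).2
  have E1 : EB μ ν (fun w => if w < q then H w - v else 0) ((V - v - 0) * b) := by
    refine EB.anti c (fun x hx y hy hxy => ?_) (fun x hx => ?_)
    · split_ifs with h1 h2 h2
      · linarith [hH ⟨hx.1, h2⟩ ⟨hy.1, h1⟩ hxy]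
      · exact absurd (lt_of_le_of_lt hxy h1) h2
      · linarith [(hHr x ⟨hx.1, h2⟩).1]
      · exact le_rfl
    · split_ifs with h1
      · constructor <;> linarith [(hHr x ⟨hx.1, h1⟩).1, (hHr x ⟨hx.1, h1⟩).2]
      · constructor <;> linarith
  have key : ∀ (k : ℝ → ℝ) (km : ℝ), MonotoneOn k (Ico 0 q) →
      (∀ x ∈ Ico 0 q, 0 ≤ k x ∧ k x ≤ km) →
      EB μ ν (fun w => if w < q then (if w ∈ L then 0 else k w) else km) ((km - 0) * b) := by
    intro k km hk hkr
    have hkm : 0 ≤ km := (hkr 0 hz).1.trans (hkr 0 hz).2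
    refine EB.monot c (fun x hx y hy hxy => ?_) (fun x hx => ?_)
    · by_cases h1 : y < q
      · have h2 : x < q := lt_of_le_of_lt hxy h1
        rw [if_pos h1, if_pos h2]
        by_cases h3 : x ∈ L
        · rw [if_pos h3]
          split_ifs
          · exact le_rfl
          · linarith [(hkr y ⟨hy.1, h1⟩).1]
        · rw [if_neg h3, if_neg (fun h => h3 (hL hxy h))]
          exact hk ⟨hx.1, h2⟩ ⟨hy.1, h1⟩ hxy
      · rw [if_neg h1]
        split_ifs with h2 h3
        · exact hkm
        · linarith [(hkr x ⟨hx.1, h2⟩).2]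
        · exact le_rfl
    · split_ifs with h1 h2
      · constructor <;> linarith
      · exact hkr x ⟨hx.1, h1⟩
      · constructor <;> linarith
  have E2 := key κ κm hκ hκr
  have E3 := key ω ωm hω hωr
  have E4 : EB μ ν (fun w => if w < q then 0 else T w - τ) ((T1 - τ - 0) * b) := by
    refine EB.monot c (fun x hx y hy hxy => ?_) (fun x hx => ?_)
    · split_ifs with h1 h2 h2
      · exact le_rfl
      · linarith [(hTr y ⟨not_lt.1 h2, hy.2⟩).1]
      · exact absurd (lt_of_le_of_lt hxy h2) h1
      · linarith [hT ⟨not_lt.1 h1, hx.2⟩ ⟨not_lt.1 h2, hy.2⟩ hxy]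
    · split_ifs with h1
      · constructor <;> linarith
      · constructor <;> linarith [(hTr x ⟨not_lt.1 h1, hx.2⟩).1, (hTr x ⟨not_lt.1 h1, hx.2⟩).2]
  have E := ((((E1.add E2.neg).add E3).add E4).add
    ((EB.ind c).const_mul (v - κm + ωm - τ))).add (EB.const c (τ + κm - ωm))
  refine (E.congr c fun x hx => ?_).mono (le_of_eq (by ring))
  by_cases h1 : x < q
  · by_cases h2 : x ∈ L
    · simp [h1, h2]; ring
    · simp [h1, h2]; ring
  · simp [h1]; ring

end OCF

namespace OCF

variable {μ ν : Measure ℝ} {a b : ℝ}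

noncomputable def Hf (C w : ℝ) : ℝ := (1 - w ^ 2) / 2 * (1 / (C + w) + 1 / (C - w))

lemma Hf_eq {C w : ℝ} (hC : 2 ≤ C) (h0 : 0 ≤ w) (h : w < q) :
    Hf C w = C * ((1 - w ^ 2) / (C ^ 2 - w ^ 2)) := by
  have hq := q_lt
  have h1 : C + w ≠ 0 := by linarith
  have h2 : C - w ≠ 0 := by linarith
  have h3 : C ^ 2 - w ^ 2 = (C + w) * (C - w) := by ring
  rw [Hf, h3]
  field_simp; ring

lemma Hf_anti {C : ℝ} (hC : 2 ≤ C) : AntitoneOn (Hf C) (Ico 0 q) := by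
  intro x hx y hy hxy
  have hq := q_lt
  rw [Hf_eq hC hx.1 hx.2, Hf_eq hC hy.1 hy.2]
  refine mul_le_mul_of_nonneg_left ?_ (by linarith)
  have hx0 := hx.1
  have hx1 := hx.2
  have hy0 := hy.1
  have hy1 := hy.2
  have hxy2 : x ^ 2 ≤ y ^ 2 := by nlinarith
  rw [div_le_div_iff₀ (by nlinarith) (by nlinarith)]
  nlinarith [mul_nonneg (sub_nonneg.2 hxy2) (show 0 ≤ C ^ 2 - 1 by nlinarith)]

lemma q_sq_lt : q ^ 2 < 0.146 := by rw [q_sq]; linarith [q_lt]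

lemma Hf_range {C : ℝ} (hC : 2 ≤ C) : ∀ x ∈ Ico 0 q, 0.854 / C ≤ Hf C x ∧ Hf C x ≤ 1 / C := by
  intro x hx
  have hq := q_lt
  have hx0 := hx.1
  have hx1 := hx.2
  have hx2 : x ^ 2 ≤ q ^ 2 := by nlinarith
  have := q_sq_lt
  rw [Hf_eq hC hx.1 hx.2]
  have hp : 0 < C ^ 2 - x ^ 2 := by nlinarith
  have hC0 : 0 < C := by linarith
  rw [mul_div_assoc', div_le_div_iff₀ hC0 hp, div_le_div_iff₀ hp hC0]
  constructor
  · nlinarith [mul_nonneg (sq_nonneg C) (show 0 ≤ 0.146 - x ^ 2 by linarith), sq_nonneg x]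
  · nlinarith [mul_nonneg (sq_nonneg x) (show 0 ≤ C ^ 2 - 1 by nlinarith)]

lemma Tf_mono {x y c1 c2 : ℝ} (hx : 0 ≤ x) (hxy : x ≤ y) (h1 : 1 ≤ c2) (h2 : c2 ≤ c1) :
    (1 + x) * (1 / (c1 + x)) ≤ (1 + y) * (1 / (c2 + y)) := by
  rw [mul_one_div, mul_one_div, div_le_div_iff₀ (by linarith) (by linarith)]
  nlinarith [mul_nonneg (sub_nonneg.2 hxy) (show 0 ≤ c1 - 1 by linarith),
    mul_nonneg (sub_nonneg.2 h2) (show 0 ≤ 1 + x by linarith)]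

lemma Tf_low {x C : ℝ} (hx : x ∈ Icc q G) (hC : 1 ≤ C) : 0.854 / C ≤ (1 + x) * (1 / (C + x)) := by
  have hx1 := hx.1
  have := lt_q
  rw [mul_one_div, div_le_div_iff₀ (by linarith) (by linarith)]
  nlinarith

lemma Tf_up {x C : ℝ} (hx : x ∈ Icc q G) (hC : 1 ≤ C) :
    (1 + x) * (1 / (C + x)) ≤ 2.6181 / (C + 1.6181) := by
  have hx1 := hx.1
  have hx2 := hx.2
  rw [G_eq] at hx2
  have := lt_q
  rw [mul_one_div, div_le_div_iff₀ (by linarith) (by linarith)]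
  nlinarith [mul_nonneg (show 0 ≤ 1.6181 - x by linarith) (show 0 ≤ C - 1 by linarith)]

lemma Qfin (c : Ctx μ ν a b) {B : Set ℝ} {h : ℝ → ℝ} {C : ℝ} (E : EB μ ν h C)
    (h0 : ∀ w ∈ Icc 0 G, 0 ≤ h w)
    (hq : ∀ w ∈ Icc 0 G, Qiter 1 w B = ENNReal.ofReal (h w)) :
    |(∫⁻ w, Qiter 1 w B ∂μ).toReal - (∫⁻ w, Qiter 1 w B ∂ν).toReal| ≤ C := by
  have e1 : ∫⁻ w, Qiter 1 w B ∂μ = ∫⁻ w, ENNReal.ofReal (h w) ∂μ := by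
    refine lintegral_congr_ae ?_
    filter_upwards [c.aeμ] with w hw using hq w hw
  have e2 : ∫⁻ w, Qiter 1 w B ∂ν = ∫⁻ w, ENNReal.ofReal (h w) ∂ν := by
    refine lintegral_congr_ae ?_
    filter_upwards [c.aeν] with w hw using hq w hw
  rw [e1, e2, ← integral_eq_lintegral_of_nonneg_ae, ← integral_eq_lintegral_of_nonneg_ae]
  · exact E.2.2
  · filter_upwards [c.aeν] with w hw using h0 w hw
  · exact E.2.1.aestronglyMeasurable
  · filter_upwards [c.aeμ] with w hw using h0 w hw
  · exact E.1.aestronglyMeasurable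

/-- abstract formula for the transition function -/
noncomputable def hf (i j : ℝ → ℕ) (w : ℝ) : ℝ :=
  if w < q then (1 - w ^ 2) / 2 * (1 / (c (i w) + w) + 1 / (c (j w) - w))
  else (1 + w) * (1 / (c (i w) + w))

lemma hf_nonneg (i j : ℝ → ℕ) : ∀ w ∈ Icc 0 G, 0 ≤ hf i j w := by
  intro w hw
  have hw0 := hw.1
  have hq := q_lt
  have h1 := c_pos (i w)
  have h2 := c_pos (j w)
  unfold hf
  split_ifs with h
  · have a1 : 0 < c (i w) + w := by linarith
    have a2 : 0 < c (j w) - w := by linarith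
    have a3 : 0 ≤ (1 - w ^ 2) / 2 := by nlinarith
    positivity
  · have a1 : 0 < c (i w) + w := by linarith
    positivity

lemma hf_val {B : Set ℝ} (hB : MeasurableSet B) (i j : ℝ → ℕ)
    (hi : ∀ w ∈ Icc 0 G, ∀ m : ℕ, 1 / (2 * (m:ℝ) + 1 + w) ∈ B ↔ i w ≤ m)
    (hj : ∀ w ∈ Icc 0 G, w < q → ∀ m : ℕ, 1 / (2 * (m:ℝ) + 1 - w) ∈ B ↔ j w ≤ m) :
    ∀ w ∈ Icc 0 G, Qiter 1 w B = ENNReal.ofReal (hf i j w) := by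
  intro w hw
  unfold hf
  split_ifs with h
  · exact Qiter_one_lt hw.1 h hB _ _ (hi w hw) (hj w hw h)
  · exact Qiter_one_ge hw (not_lt.1 h) hB _ (hi w hw)

lemma Tmono_aux {S : Set ℝ} (hS : IsUpperSet S) (k : ℕ) :
    MonotoneOn (fun w => (1 + w) * (1 / (c (if w ∈ S then k else k + 1) + w))) (Icc q G) := by
  intro x hx y hy hxy
  refine Tf_mono (by linarith [hx.1, lt_q]) hxy (c_pos _) ?_
  split_ifs with h1 h2 h2
  · exact le_rfl
  · exact c_le k
  · exact absurd (hS hxy h2) h1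
  · exact le_rfl

lemma c_ge_two {k : ℕ} (hk : 1 ≤ k) : 2 ≤ c k ∧ c (k + 1) = c k + 2 := by
  obtain ⟨l, rfl⟩ := Nat.exists_eq_add_of_le' hk
  rw [c_succ, c_succ]
  have : (0:ℝ) ≤ l := l.cast_nonneg
  push_cast
  constructor <;> linarith

lemma caseA_succ (ct : Ctx μ ν (2 / 3 * b) b) (hb : 0 ≤ b) {S : Set ℝ} (hS : IsUpperSet S) {k : ℕ}
    (hk : 1 ≤ k) :
    EB μ ν (hf (fun w => if w ∈ S then k else k + 1) (fun _ => k + 1)) (0.8234 * b) := by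
  obtain ⟨hx, hC⟩ := c_ge_two hk
  have hq := q_lt
  have E := comboA ct hS (H := Hf (c (k + 1)))
    (J := fun w => (1 - w ^ 2) * (1 / ((c k + w) * (c (k + 1) + w))))
    (T := fun w => (1 + w) * (1 / (c (if w ∈ S then k else k + 1) + w)))
    (v := 0.854 / c (k + 1)) (V := 1 / c (k + 1)) (j := 0) (J0 := 1 / 8) (τ := 0.854 / c (k + 1))
    (T1 := 2.6181 / (c k + 1.6181))
    (Hf_anti (by linarith)) (Hf_range (by linarith)) ?_ ?_ le_rfl (Tmono_aux hS k) ?_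
  · refine (E.congr ct fun w hw => ?_).mono ?_
    · unfold hf Hf
      by_cases h : w < q
      · simp only [if_pos h]
        by_cases h2 : w ∈ S
        · simp only [if_pos h2]
          rw [hC]
          have h0 := hw.1
          have a1 : c k + w ≠ 0 := by linarith
          have a2 : c k + 2 + w ≠ 0 := by linarith
          have a3 : c k + 2 - w ≠ 0 := by linarith
          field_simp; ring
        · simp only [if_neg h2, add_zero]
      · simp only [if_neg h]
    · rw [add_zero, sub_self, abs_zero, zero_mul, add_zero]
      refine mul_le_mul_of_nonneg_right ?_ hb
      rw [hC]
      generalize c k = x at hx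
      have h1 : 2.6181 / (x + 1.6181) ≤ 0.5734 + 0.708 * (1 / (x + 2)) := by
        rw [mul_one_div, ← sub_le_iff_le_add, div_sub_div _ _ (by linarith) (by linarith),
          div_le_iff₀ (mul_pos (by linarith) (by linarith))]
        nlinarith
      have h2 : 0.854 / (x + 2) = 0.854 * (1 / (x + 2)) := by ring
      rw [h2]
      linarith
  · intro x hx' y hy hxy
    have hx0 := hx'.1
    have hy1 := hy.2
    refine mul_le_mul (by nlinarith) ?_ ?_ (by nlinarith)
    · refine one_div_le_one_div_of_le (mul_pos (by linarith) (by linarith)) ?_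
      exact mul_le_mul (by linarith) (by linarith) (by linarith) (by linarith)
    · exact one_div_nonneg.2 (mul_nonneg (by linarith) (by linarith))
  · intro x hx'
    have hx0 := hx'.1
    have hx1 := hx'.2
    have hp : 8 ≤ (c k + x) * (c (k + 1) + x) := by nlinarith
    have h3 : 1 / ((c k + x) * (c (k + 1) + x)) ≤ 1 / 8 := one_div_le_one_div_of_le (by norm_num) hp
    have h4 : 0 ≤ 1 / ((c k + x) * (c (k + 1) + x)) := one_div_nonneg.2 (by linarith)
    constructor
    · exact mul_nonneg (by nlinarith) h4
    · nlinarith [mul_nonneg (sq_nonneg x) h4]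
  · intro x hx'
    have hx0 := hx'.1
    have := lt_q
    constructor
    · refine (Tf_low hx' (c_pos (k + 1))).trans (Tf_mono (by linarith) le_rfl (c_pos _) ?_)
      split_ifs
      · exact c_le k
      · exact le_rfl
    · refine le_trans (Tf_mono (by linarith) le_rfl (c_pos k) ?_) (Tf_up hx' (c_pos k))
      split_ifs
      · exact le_rfl
      · exact c_le k

lemma caseA_zero (ct : Ctx μ ν (2 / 3 * b) b) (hb : 0 ≤ b) {S : Set ℝ} (hS : IsUpperSet S) :
    EB μ ν (hf (fun w => if w ∈ S then 0 else 0 + 1) (fun _ => 0 + 1)) (0.8234 * b) := by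
  have hq := q_lt
  have hq' := lt_q
  have hc1 : c (0 + 1) = 2 := by rw [c_succ]; norm_num
  by_cases hqS : q ∈ S
  · have E := comboA ct hS (H := Hf 2)
      (J := fun w => (1 - w) * (1 / (2 * (2 + w))))
      (T := fun _ => 1)
      (v := 0.854 / 2) (V := 1 / 2) (j := 0.129) (J0 := 1 / 4) (τ := 1)
      (T1 := 1)
      (Hf_anti le_rfl) (Hf_range le_rfl) ?_ ?_ (by norm_num) (fun x _ y _ _ => le_rfl)
      (fun x _ => ⟨le_rfl, le_rfl⟩)
    · refine (E.congr ct fun w hw => ?_).mono ?_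
      · have h0 := hw.1
        unfold hf Hf
        by_cases h : w < q
        · simp only [if_pos h]
          rw [hc1]
          by_cases h2 : w ∈ S
          · simp only [if_pos h2]
            rw [c_zero]
            have a1 : 1 + w ≠ 0 := by linarith
            have a2 : 2 + w ≠ 0 := by linarith
            have a3 : 2 - w ≠ 0 := by linarith
            field_simp; ring
          · simp only [if_neg h2, add_zero]
            rw [show c 1 = 2 from hc1]
        · simp only [if_neg h]
          rw [if_pos (hS (not_lt.1 h) hqS), c_zero]
          have a1 : 1 + w ≠ 0 := by linarith
          field_simp
      · rw [abs_of_nonpos (by norm_num)]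
        nlinarith
    · intro x hx' y hy hxy
      have hx0 := hx'.1
      have hy1 := hy.2
      refine mul_le_mul (by linarith) ?_ ?_ (by linarith)
      · exact one_div_le_one_div_of_le (by linarith) (by linarith)
      · exact one_div_nonneg.2 (by linarith)
    · intro x hx'
      have hx0 := hx'.1
      have hx1 := hx'.2
      rw [mul_one_div, le_div_iff₀ (by linarith), div_le_iff₀ (by linarith)]
      constructor <;> linarith
  · have E := comboA ct hS (H := Hf 2)
      (J := fun w => 0)
      (T := fun w => (1 + w) * (1 / (c (if w ∈ S then 0 else 0 + 1) + w)))
      (v := 0.854 / 2) (V := 1 / 2) (j := 0) (J0 := 0) (τ := 0.854 / 2)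
      (T1 := 1)
      (Hf_anti le_rfl) (Hf_range le_rfl) (fun x _ y _ _ => le_rfl) (fun x _ => ⟨le_rfl, le_rfl⟩)
      le_rfl (Tmono_aux hS 0) ?_
    · refine (E.congr ct fun w hw => ?_).mono ?_
      · unfold hf Hf
        by_cases h : w < q
        · simp only [if_pos h]
          have h2 : w ∉ S := fun h2 => hqS (hS h.le h2)
          simp only [if_neg h2, add_zero]
          rw [hc1]
        · simp only [if_neg h]
      · rw [show (0.854 / 2 + 0 - 0.854 / 2 : ℝ) = 0 by ring, abs_zero, zero_mul, add_zero]
        nlinarith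
    · intro x hx'
      have hx0 := hx'.1
      constructor
      · rw [← hc1]
        refine (Tf_low hx' (c_pos (0 + 1))).trans (Tf_mono (by linarith) le_rfl (c_pos _) ?_)
        split_ifs
        · exact c_le 0
        · exact le_rfl
      · rw [mul_one_div, div_le_iff₀ (by linarith [c_pos (if x ∈ S then 0 else 0 + 1)])]
        linarith [c_pos (if x ∈ S then 0 else 0 + 1)]

lemma caseB_zero (ct : Ctx μ ν (2 / 3 * b) b) (hb : 0 ≤ b) {L : Set ℝ} (hL : IsLowerSet L) :
    EB μ ν (hf (fun _ => 0) (fun w => if w ∈ L then 0 else 0 + 1)) (0.8234 * b) := by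
  have hq := q_lt
  have hq' := lt_q
  have hc1 : c (0 + 1) = 2 := by rw [c_succ]; norm_num
  have E := comboB ct hL (H := fun _ => 1) (κ := fun w => (1 + w) * (1 / (2 * (2 - w))))
    (ω := fun _ => 0) (T := fun _ => 1) (v := 1) (V := 1) (κm := 0.4272) (ωm := 0) (τ := 1) (T1 := 1)
    (fun x _ y _ _ => le_rfl) (fun x _ => ⟨le_rfl, le_rfl⟩) ?_ ?_
    (fun x _ y _ _ => le_rfl) (fun x _ => ⟨le_rfl, le_rfl⟩)
    (fun x _ y _ _ => le_rfl) (fun x _ => ⟨le_rfl, le_rfl⟩)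
  · refine (E.congr ct fun w hw => ?_).mono ?_
    · have h0 := hw.1
      unfold hf
      have a1 : 1 + w ≠ 0 := by linarith
      by_cases h : w < q
      · simp only [if_pos h]
        have a3 : 2 - w ≠ 0 := by linarith
        have a2 : 1 - w ≠ 0 := by linarith
        by_cases h2 : w ∈ L
        · simp only [if_pos h2]
          rw [c_zero]
          field_simp; ring
        · simp only [if_neg h2]
          rw [hc1, c_zero]
          field_simp; ring
      · simp only [if_neg h]
        rw [c_zero]
        field_simp
    · rw [abs_of_nonpos (by norm_num)]
      nlinarith
  · intro x hx y hy hxy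
    have hx0 := hx.1
    have hy1 := hy.2
    refine mul_le_mul (by linarith) ?_ ?_ (by linarith)
    · exact one_div_le_one_div_of_le (by linarith) (by linarith)
    · exact one_div_nonneg.2 (by linarith)
  · intro x hx
    have hx0 := hx.1
    have hx1 := hx.2
    rw [mul_one_div, le_div_iff₀ (by linarith), div_le_iff₀ (by linarith)]
    constructor <;> linarith

lemma caseB_succ (ct : Ctx μ ν (2 / 3 * b) b) (hb : 0 ≤ b) {L : Set ℝ} (hL : IsLowerSet L) {k : ℕ}
    (hk : 1 ≤ k) :
    EB μ ν (hf (fun _ => k) (fun w => if w ∈ L then k else k + 1)) (0.8234 * b) := by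
  obtain ⟨hx, hC⟩ := c_ge_two hk
  have hq := q_lt
  have hq' := lt_q
  have kmon : MonotoneOn (fun w => 1 / ((c k - w) * (c (k + 1) - w))) (Ico 0 q) := by
    intro x hx' y hy hxy
    have hx0 := hx'.1
    have hy1 := hy.2
    refine one_div_le_one_div_of_le (mul_pos (by linarith) (by linarith)) ?_
    exact mul_le_mul (by linarith) (by linarith) (by linarith) (by linarith)
  have kran : ∀ x ∈ Ico 0 q, 0 ≤ 1 / ((c k - x) * (c (k + 1) - x)) ∧
      1 / ((c k - x) * (c (k + 1) - x)) ≤ 0.1711 := by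
    intro x hx'
    have hx1 := hx'.2
    have hp : 1.618 * 3.618 ≤ (c k - x) * (c (k + 1) - x) :=
      mul_le_mul (by linarith) (by linarith) (by norm_num) (by linarith)
    refine ⟨one_div_nonneg.2 (by linarith), ?_⟩
    rw [div_le_iff₀ (by linarith)]
    linarith
  have E := comboB ct hL (H := Hf (c k)) (κ := fun w => 1 / ((c k - w) * (c (k + 1) - w)))
    (ω := fun w => w ^ 2 * (1 / ((c k - w) * (c (k + 1) - w))))
    (T := fun w => (1 + w) * (1 / (c k + w)))
    (v := 0.854 / c k) (V := 1 / c k) (κm := 0.1711) (ωm := 0.025)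
    (τ := 0.854 / c k - 0.1711 + 0.025)
    (T1 := 2.6181 / (c k + 1.6181))
    (Hf_anti (by linarith)) (Hf_range (by linarith)) kmon kran ?_ ?_ ?_ ?_
  · refine (E.congr ct fun w hw => ?_).mono ?_
    · unfold hf Hf
      by_cases h : w < q
      · simp only [if_pos h]
        have h0 := hw.1
        by_cases h2 : w ∈ L
        · simp only [if_pos h2]; ring
        · simp only [if_neg h2]
          rw [hC]
          have a1 : c k + w ≠ 0 := by linarith
          have a2 : c k + 2 - w ≠ 0 := by linarith
          have a3 : c k - w ≠ 0 := by linarith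
          field_simp; ring
      · simp only [if_neg h]
    · rw [sub_self, abs_zero, zero_mul, add_zero]
      refine mul_le_mul_of_nonneg_right ?_ hb
      generalize c k = x at hx
      have h1 : 2.6181 / (x + 1.6181) ≤ 0.48 + 0.708 * (1 / x) := by
        rw [mul_one_div, ← sub_le_iff_le_add, div_sub_div _ _ (by linarith) (by linarith),
          div_le_iff₀ (mul_pos (by linarith) (by linarith))]
        nlinarith
      have h2 : 0.854 / x = 0.854 * (1 / x) := by ring
      rw [h2]
      linarith
  · intro x hx' y hy hxy
    have hx0 := hx'.1
    exact mul_le_mul (by nlinarith) (kmon hx' hy hxy) (kran x hx').1 (by positivity)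
  · intro x hx'
    have hx0 := hx'.1
    have hx1 := hx'.2
    have h1 := kran x hx'
    refine ⟨mul_nonneg (sq_nonneg x) h1.1, ?_⟩
    have hx2 : x ^ 2 ≤ 0.146 := by nlinarith [q_sq_lt]
    calc _ ≤ 0.146 * 0.1711 := mul_le_mul hx2 h1.2 h1.1 (by norm_num)
      _ ≤ _ := by norm_num
  · intro x hx' y hy hxy
    exact Tf_mono (by linarith [hx'.1]) hxy (c_pos _) le_rfl
  · intro x hx'
    exact ⟨by linarith [Tf_low hx' (c_pos k)], Tf_up hx' (c_pos k)⟩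

lemma caseQ (ct : Ctx μ ν (2 / 3 * b) b) (hb : 0 ≤ b) :
    EB μ ν (hf (fun _ => 1) (fun _ => 1)) (0.8234 * (2 / 3) * b) := by
  have hc1 : c 1 = 2 := by simp [c]
  have hq := q_lt
  have hq' := lt_q
  have E := comboA ct (isUpperSet_univ) (H := Hf 2)
      (J := fun w => 0)
      (T := fun w => (1 + w) * (1 / (2 + w)))
      (v := 0.854 / 2) (V := 1 / 2) (j := 0) (J0 := 0) (τ := 0.854 / 2)
      (T1 := 2.6181 / (2 + 1.6181))
      (Hf_anti le_rfl) (Hf_range le_rfl) (fun x _ y _ _ => le_rfl) (fun x _ => ⟨le_rfl, le_rfl⟩)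
      le_rfl ?_ ?_
  · refine (E.congr ct fun w hw => ?_).mono ?_
    · unfold hf Hf
      simp [hc1]
    · rw [show (0.854 / 2 + 0 - 0.854 / 2 : ℝ) = 0 by ring, abs_zero, zero_mul, add_zero]
      refine mul_le_mul_of_nonneg_right ?_ hb
      norm_num
  · intro x hx' y hy hxy
    exact Tf_mono (by linarith [hx'.1]) hxy (by norm_num) le_rfl
  · intro x hx'
    exact ⟨Tf_low hx' (by norm_num), Tf_up hx' (by norm_num)⟩

end OCF

namespace OCF

variable {μ ν : Measure ℝ} {a b : ℝ}

lemma stepB (ct : Ctx μ ν (2 / 3 * b) b) (hb : 0 ≤ b) {B : Set ℝ} (hB : IsLowerSet B) :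
    |(∫⁻ w, Qiter 1 w B ∂μ).toReal - (∫⁻ w, Qiter 1 w B ∂ν).toReal| ≤ 0.8234 * b := by
  have hq := q_lt
  have hq' := lt_q
  have hG := G_eq
  have hBm := lower_meas hB
  have hmono : ∀ {s t : ℝ}, 0 < s → s ≤ t → 1 / s ∈ B → 1 / t ∈ B := fun hs hst h =>
    hB (one_div_le_one_div_of_le hs hst) h
  by_cases hex : ∃ k : ℕ, 1 / (2 * (k:ℝ) + 1 + G) ∈ B
  swap
  · push Not at hex
    refine Qfin ct ((EB.const ct 0).mono (by positivity)) (fun _ _ => le_rfl) fun w hw => ?_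
    have hw0 := hw.1
    have hw1 := hw.2
    rw [Qiter_one_apply w hBm, ENNReal.ofReal_zero, ENNReal.tsum_eq_zero]
    intro m
    have hm : (0:ℝ) ≤ m := m.cast_nonneg
    rw [if_neg, if_neg]
    · simp
    · intro h
      unfold uF at h
      rw [if_neg (by norm_num)] at h
      push_cast at h
      change (if w < q then 1 / (2 * (m:ℝ) + 1 - w) else 1 / (2 * (m:ℝ) + 1 - q)) ∈ B at h
      split_ifs at h
      · exact hex m (hmono (by linarith) (by linarith) h)
      · exact hex m (hmono (by linarith) (by linarith) h)
    · intro h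
      unfold uF at h
      rw [if_pos rfl] at h
      push_cast at h
      exact hex m (hmono (by linarith) (by linarith) h)
  obtain ⟨k, hk, hmin⟩ : ∃ k : ℕ, 1 / (2 * (k:ℝ) + 1 + G) ∈ B ∧
      ∀ m < k, 1 / (2 * (m:ℝ) + 1 + G) ∉ B :=
    ⟨Nat.find hex, Nat.find_spec hex, fun m hm => Nat.find_min hex hm⟩
  have hk0 : (0:ℝ) ≤ k := k.cast_nonneg
  have f1 : ∀ m : ℕ, k + 1 ≤ m → ∀ w : ℝ, -q ≤ w → 1 / (2 * (m:ℝ) + 1 + w) ∈ B := by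
    intro m hm w hw
    have hm' : (k:ℝ) + 1 ≤ m := by exact_mod_cast hm
    exact hmono (by linarith) (by linarith) hk
  have f2 : ∀ m : ℕ, m < k → ∀ w : ℝ, -q ≤ w → w ≤ G → 1 / (2 * (m:ℝ) + 1 + w) ∉ B := by
    intro m hm w hw hw' h
    have hm0 : (0:ℝ) ≤ m := m.cast_nonneg
    exact hmin m hm (hmono (by linarith) (by linarith) h)
  have f1' : ∀ m : ℕ, k + 1 ≤ m → ∀ w : ℝ, w < q → 1 / (2 * (m:ℝ) + 1 - w) ∈ B := by
    intro m hm w hw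
    have := f1 m hm (-w) (by linarith)
    rwa [← sub_eq_add_neg] at this
  have f2' : ∀ m : ℕ, m < k → ∀ w : ℝ, 0 ≤ w → w < q → 1 / (2 * (m:ℝ) + 1 - w) ∉ B := by
    intro m hm w hw hw'
    have := f2 m hm (-w) (by linarith) (by linarith)
    rwa [← sub_eq_add_neg] at this
  by_cases hkB : 1 / (2 * (k:ℝ) + 1) ∈ B
  · obtain ⟨L, hLd⟩ : ∃ L : Set ℝ, ∀ w, w ∈ L ↔ 1 / (2 * (k:ℝ) + 1 - min w q) ∈ B :=
      ⟨{w | 1 / (2 * (k:ℝ) + 1 - min w q) ∈ B}, fun _ => Iff.rfl⟩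
    have hL : IsLowerSet L := by
      intro x y hxy hx
      have h1 : min x q ≤ q := min_le_right _ _
      have h2 : min y q ≤ min x q := min_le_min hxy le_rfl
      exact (hLd y).2 (hmono (by linarith) (by linarith) ((hLd x).1 hx))
    have E : EB μ ν (hf (fun _ => k) (fun w => if w ∈ L then k else k + 1)) (0.8234 * b) := by
      rcases Nat.eq_zero_or_pos k with h | h
      · rw [h]; exact caseB_zero ct hb hL
      · exact caseB_succ ct hb hL h
    refine Qfin ct E (hf_nonneg _ _) (hf_val hBm _ _ ?_ ?_)
    · intro w hw m
      have hw0 := hw.1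
      rcases lt_trichotomy m k with h | h | h
      · exact iff_of_false (f2 m h w (by linarith) hw.2) (by simpa using h)
      · subst h
        exact iff_of_true (hmono (by linarith) (by linarith) hkB) le_rfl
      · exact iff_of_true (f1 m h w (by linarith)) h.le
    · intro w hw hwq m
      have hw0 := hw.1
      have hLw : w ∈ L ↔ 1 / (2 * (k:ℝ) + 1 - w) ∈ B := by
        rw [hLd, min_eq_left hwq.le]
      rcases lt_trichotomy m k with h | h | h
      · refine iff_of_false (f2' m h w hw0 hwq) ?_
        split_ifs <;> omega
      · subst h
        rw [← hLw]
        split_ifs with h1 <;> simp [h1]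
      · refine iff_of_true (f1' m h w hwq) ?_
        split_ifs <;> omega
  · obtain ⟨S, hSd⟩ : ∃ S : Set ℝ, ∀ w, w ∈ S ↔ 1 / (2 * (k:ℝ) + 1 + max w 0) ∈ B :=
      ⟨{w | 1 / (2 * (k:ℝ) + 1 + max w 0) ∈ B}, fun _ => Iff.rfl⟩
    have hS : IsUpperSet S := by
      intro x y hxy hx
      have h1 : 0 ≤ max x 0 := le_max_right _ _
      have h2 : max x 0 ≤ max y 0 := max_le_max hxy le_rfl
      exact (hSd y).2 (hmono (by linarith) (by linarith) ((hSd x).1 hx))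
    have E : EB μ ν (hf (fun w => if w ∈ S then k else k + 1) (fun _ => k + 1)) (0.8234 * b) := by
      rcases Nat.eq_zero_or_pos k with h | h
      · rw [h]; exact caseA_zero ct hb hS
      · exact caseA_succ ct hb hS h
    refine Qfin ct E (hf_nonneg _ _) (hf_val hBm _ _ ?_ ?_)
    · intro w hw m
      have hw0 := hw.1
      have hSw : w ∈ S ↔ 1 / (2 * (k:ℝ) + 1 + w) ∈ B := by
        rw [hSd, max_eq_left hw0]
      rcases lt_trichotomy m k with h | h | h
      · refine iff_of_false (f2 m h w (by linarith) hw.2) ?_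
        split_ifs <;> omega
      · subst h
        rw [← hSw]
        split_ifs with h1 <;> simp [h1]
      · refine iff_of_true (f1 m h w (by linarith)) ?_
        split_ifs <;> omega
    · intro w hw hwq m
      have hw0 := hw.1
      rcases lt_trichotomy m k with h | h | h
      · exact iff_of_false (f2' m h w hw0 hwq) (by omega)
      · subst h
        exact iff_of_false (fun h => hkB (hmono (by linarith) (by linarith) h)) (by omega)
      · exact iff_of_true (f1' m h w hwq) h

lemma stepQ (ct : Ctx μ ν (2 / 3 * b) b) (hb : 0 ≤ b) :
    |(∫⁻ w, Qiter 1 w (Iio q) ∂μ).toReal - (∫⁻ w, Qiter 1 w (Iio q) ∂ν).toReal|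
      ≤ 0.8234 * (2 / 3) * b := by
  have hq := q_lt
  have hq' := lt_q
  have hG := G_eq
  have key : ∀ s : ℝ, 0 < s → (1 / s ∈ Iio q ↔ 3 - q < s) := by
    intro s hs
    rw [mem_Iio]
    nth_rw 1 [← q_inv]
    exact one_div_lt_one_div hs (by linarith)
  refine Qfin ct (caseQ ct hb) (hf_nonneg _ _) (hf_val measurableSet_Iio _ _ ?_ ?_)
  · intro w hw m
    have hw0 := hw.1
    have hw1 := hw.2
    have hm0 : (0:ℝ) ≤ m := m.cast_nonneg
    rw [key _ (by linarith)]
    rcases Nat.eq_zero_or_pos m with h | h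
    · subst h
      refine iff_of_false ?_ (by omega)
      push_cast; linarith
    · have : (1:ℝ) ≤ m := by exact_mod_cast h
      exact iff_of_true (by linarith) h
  · intro w hw hwq m
    have hw0 := hw.1
    have hm0 : (0:ℝ) ≤ m := m.cast_nonneg
    rw [key _ (by linarith)]
    rcases Nat.eq_zero_or_pos m with h | h
    · subst h
      refine iff_of_false ?_ (by omega)
      push_cast; linarith
    · have : (1:ℝ) ≤ m := by exact_mod_cast h
      exact iff_of_true (by linarith) h

lemma main_ctx (n : ℕ) {w : ℝ} (hw : w ∈ Icc 0 G) :
    Ctx (Qiter n w) Qinf (2 / 3 * 0.8234 ^ n) (0.8234 ^ n) := by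
  induction n with
  | zero =>
    have p1 : IsProbabilityMeasure (Qiter 0 w) := ⟨Qiter_univ 0 hw⟩
    have p2 : IsProbabilityMeasure Qinf := ⟨Qinf_univ⟩
    refine ⟨p1, p2, Qiter_compl 0 hw, Qinf_compl, fun B _ => ?_, ?_⟩
    · have h1 : (Qiter 0 w).real B ≤ 1 := measureReal_le_one
      have h2 : Qinf.real B ≤ 1 := measureReal_le_one
      have h3 : 0 ≤ (Qiter 0 w).real B := measureReal_nonneg
      have h4 : 0 ≤ Qinf.real B := measureReal_nonneg
      rw [pow_zero, abs_le]; constructor <;> linarith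
    · have h := Qinf_q
      rw [← measureReal_def] at h
      have h1 := h.1
      have h2 := h.2
      have h3 : (Qiter 0 w).real (Iio q) = 0 ∨ (Qiter 0 w).real (Iio q) = 1 := by
        rw [Qiter, measureReal_def, Measure.dirac_apply' _ measurableSet_Iio]
        by_cases hwq : w ∈ Iio q
        · right; simp [indicator_of_mem hwq]
        · left; simp [indicator_of_notMem hwq]
      rw [pow_zero, abs_le]
      rcases h3 with h3 | h3 <;> rw [h3] <;> constructor <;> linarith
  | succ n ih =>
    have hb : (0:ℝ) ≤ 0.8234 ^ n := by positivity
    refine ⟨⟨Qiter_univ _ hw⟩, ⟨Qinf_univ⟩, Qiter_compl _ hw, Qinf_compl, fun B hB => ?_, ?_⟩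
    · rw [measureReal_def, measureReal_def, Qiter_comp n w (lower_meas hB),
        ← Qinf_inv (lower_meas hB), pow_succ']
      exact stepB ih hb hB
    · rw [measureReal_def, measureReal_def, Qiter_comp n w measurableSet_Iio,
        ← Qinf_inv measurableSet_Iio]
      refine (stepQ ih hb).trans (le_of_eq ?_)
      rw [pow_succ]; ring

lemma Ico_eq_Iio {ρ : Measure ℝ} (h : ρ (Icc 0 G)ᶜ = 0) (y : ℝ) : ρ (Ico 0 y) = ρ (Iio y) := by
  have h' : ∀ᵐ x ∂ρ, x ∈ Icc 0 G := h
  refine measure_congr ?_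
  filter_upwards [h'] with x hx
  exact propext ⟨fun h => h.2, fun h => ⟨hx.1, h⟩⟩

end OCF

/-- With `θ = 0.8234`, for every `n ≥ 1`, every `w ∈ W` and every `y ∈ W`,
`|Qⁿ(w,[0,y)) - Q∞([0,y))| ≤ θⁿ`. -/
theorem ocf_Qn_convergence (n : ℕ) (hn : 1 ≤ n) (w : ℝ) (hw : w ∈ Set.Icc (0 : ℝ) G)
    (y : ℝ) (hy : y ∈ Set.Icc (0 : ℝ) G) :
    |(Qiter n w (Set.Ico 0 y)).toReal - (Qinf (Set.Ico 0 y)).toReal| ≤ 0.8234 ^ n := by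
  have h := (OCF.main_ctx n hw).hb (Set.Iio y) (isLowerSet_Iio y)
  rw [OCF.Ico_eq_Iio (OCF.Qiter_compl n hw), OCF.Ico_eq_Iio OCF.Qinf_compl]
  exact h
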